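/- arXiv:math/0210228 — 3 statements merged into one kernel-verified Lean document; each statement's English description precedes it below -/
import Mathlib

section
/- Let p > 2, let A be a countably infinite set, and let X be the Banach space X(𝒫) where 𝒫 consists of a single partition–weight pair (P, W) on A. Then X is isomorphic (via a bounded linear bijection with bounded inverse) to one of the following spaces: ℓ_p, ℓ_2, ℓ_2 ⊕ ℓ_p, or the ℓ_p-sum (Σ ℓ_2)_{ℓ_p} of countably many copies of ℓ_2. -/
open scoped ENNReal
open MeasureTheory Filter

noncomputable section

variable {α : Type*}

/-- `P` is a partition of the type `α`: a collection of pairwise disjoint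
nonempty subsets of `α` whose union is all of `α`. -/
def IsPartition (P : Set (Set α)) : Prop :=
  (∀ N ∈ P, N.Nonempty) ∧ P.PairwiseDisjoint id ∧ ⋃₀ P = Set.univ

/-- A weight function takes values in `(0,1]`. -/
def IsWeight (W : α → ℝ) : Prop := ∀ a, W a ∈ Set.Ioc (0 : ℝ) 1

/-- `‖x‖_{P,W} = (Σ_{N∈P} (Σ_{j∈N} x_j² w_j²)^{p/2})^{1/p}`, valued in `[0,∞]`. -/
def pwNorm (p : ℝ) (P : Set (Set α)) (W : α → ℝ) (x : α → ℝ) : ℝ≥0∞ :=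
  (∑' N : P, (∑' j : N.1, ENNReal.ofReal ((x j.1) ^ 2 * (W j.1) ^ 2)) ^ (p / 2)) ^ (1 / p)

/-- A partition–weight pair on `α`. -/
abbrev PWPair (α : Type*) := Set (Set α) × (α → ℝ)

/-- Every member of the family is a genuine partition–weight pair. -/
def IsPWFamily (𝒞 : Set (PWPair α)) : Prop :=
  ∀ PW ∈ 𝒞, IsPartition PW.1 ∧ IsWeight PW.2

/-- `‖x‖_𝒞 = sup_{(P,W) ∈ 𝒞} ‖x‖_{P,W}`. -/
def famNorm (p : ℝ) (𝒞 : Set (PWPair α)) (x : α → ℝ) : ℝ≥0∞ :=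
  ⨆ PW ∈ 𝒞, pwNorm p PW.1 PW.2 x

/-- `X(𝒞)` (the space of `x : α → ℝ` with `famNorm p 𝒞 x < ∞`) is isomorphic to the
normed space `E` via a bounded linear bijection with bounded inverse: there is a map
`R`, additive and homogeneous on `X(𝒞)`, onto `E`, with two-sided norm estimates. -/
def IsomorphicToPW (p : ℝ) (𝒞 : Set (PWPair α)) (E : Type*)
    [NormedAddCommGroup E] [NormedSpace ℝ E] : Prop :=
  ∃ (R : (α → ℝ) → E) (c C : ℝ), 0 < c ∧
    (∀ x y, famNorm p 𝒞 x < ⊤ → famNorm p 𝒞 y < ⊤ → R (x + y) = R x + R y) ∧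
    (∀ (r : ℝ) (x), famNorm p 𝒞 x < ⊤ → R (r • x) = r • R x) ∧
    (∀ e : E, ∃ x, famNorm p 𝒞 x < ⊤ ∧ R x = e) ∧
    (∀ x, famNorm p 𝒞 x < ⊤ →
      ENNReal.ofReal c * famNorm p 𝒞 x ≤ ENNReal.ofReal ‖R x‖ ∧
      ENNReal.ofReal ‖R x‖ ≤ ENNReal.ofReal C * famNorm p 𝒞 x)

open scoped NNReal Matrix

/-!
Rescaling the coordinates removes the weight, so `X(𝒫)` is the `ℓ_p`-sum, over the blocks `N` of the
partition, of the Hilbert spaces `ℓ_2(N)`. If there are finitely many blocks, this is `ℓ_2`. If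
infinitely many blocks are infinite, the `ℓ_p`-sum of copies of `ℓ_2` absorbs all others. Otherwise
the finitely many infinite blocks, if any, contribute `ℓ_2`, and it remains to see that infinitely
many finite blocks contribute `ℓ_p`: by Khinchine's inequality for `p` and for the conjugate
exponent, the span of the Rademacher functions is a copy of `ℓ_2(N)` complemented in the `ℓ_p`-space
over the cube `{1, -1}^N`, uniformly in `N`, so the sum is complemented in `ℓ_p`; it contains a
complemented copy of `ℓ_p`, spanned by one point of each block, and Pełczyński's decomposition
method applies.
-/

/-! ### Gauges -/

/-- Two `[0,∞]`-valued functions `G` and `G'` on real vector spaces are equivalent with constant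
`C` if some linear bijection distorts them by a factor of at most `C`. Here `G` and `G'` are `p`-th
powers of extended norms rather than norms, so that `ℓ_p`-sums become plain sums; the vectors of
finite gauge form the normed space in question. -/
def GaugeEquivWith {V V' : Type*} [AddCommGroup V] [Module ℝ V] [AddCommGroup V'] [Module ℝ V']
    (C : ℝ≥0) (G : V → ℝ≥0∞) (G' : V' → ℝ≥0∞) : Prop :=
  ∃ T : V ≃ₗ[ℝ] V', ∀ x, G' (T x) ≤ C * G x ∧ G x ≤ C * G' (T x)

/-- Equivalence of gauges with some constant, i.e. linear isomorphism of the normed spaces they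
define. -/
def GaugeEquiv {V V' : Type*} [AddCommGroup V] [Module ℝ V] [AddCommGroup V'] [Module ℝ V']
    (G : V → ℝ≥0∞) (G' : V' → ℝ≥0∞) : Prop :=
  ∃ C, GaugeEquivWith C G G'

/-- The gauge of the `ℓ_p`-sum of a family of spaces with gauges `G i`. -/
def sumGauge {ι : Type*} {V : ι → Type*} (G : ∀ i, V i → ℝ≥0∞) (x : ∀ i, V i) : ℝ≥0∞ :=
  ∑' i, G i (x i)

/-- The gauge of the `ℓ_p`-sum of two spaces. -/
def prodGauge {V V' : Type*} (G : V → ℝ≥0∞) (G' : V' → ℝ≥0∞) (x : V × V') : ℝ≥0∞ :=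
  G x.1 + G' x.2

/-- The `p`-th power of the absolute value on `ℝ`. -/
def scalarGauge (p : ℝ) (x : ℝ) : ℝ≥0∞ := ‖x‖ₑ ^ p

/-- The `p`-th power of the norm of `ℓ_p(S)`. -/
def lpGauge (p : ℝ) (S : Type*) : (S → ℝ) → ℝ≥0∞ := sumGauge fun _ => scalarGauge p

/-- The `p`-th power of the norm of `ℓ_2(S)`. -/
def hilbertGauge (p : ℝ) (S : Type*) (x : S → ℝ) : ℝ≥0∞ := (∑' j, ‖x j‖ₑ ^ 2) ^ (p / 2)

local infixl:65 "⊕ₚ" => prodGauge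

local infix:50 "≃ᵍ" => GaugeEquiv

section Gauge

variable {V V' V'' U U' : Type*} [AddCommGroup V] [Module ℝ V] [AddCommGroup V'] [Module ℝ V']
  [AddCommGroup V''] [Module ℝ V''] [AddCommGroup U] [Module ℝ U] [AddCommGroup U'] [Module ℝ U']
  {G : V → ℝ≥0∞} {G' : V' → ℝ≥0∞} {G'' : V'' → ℝ≥0∞} {H : U → ℝ≥0∞} {H' : U' → ℝ≥0∞} {C D : ℝ≥0}

lemma GaugeEquivWith.gaugeEquiv (h : GaugeEquivWith C G G') : G ≃ᵍ G' := ⟨C, h⟩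

lemma gaugeEquivWith_one_of_eq (T : V ≃ₗ[ℝ] V') (h : ∀ x, G' (T x) = G x) :
    GaugeEquivWith 1 G G' :=
  ⟨T, fun x => by simp [h]⟩

lemma gaugeEquiv_of_eq (T : V ≃ₗ[ℝ] V') (h : ∀ x, G' (T x) = G x) : G ≃ᵍ G' :=
  (gaugeEquivWith_one_of_eq T h).gaugeEquiv

lemma GaugeEquivWith.symm : GaugeEquivWith C G G' → GaugeEquivWith C G' G
  | ⟨T, h⟩ => ⟨T.symm, fun x => by simpa using (h (T.symm x)).symm⟩

lemma GaugeEquivWith.trans :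
    GaugeEquivWith C G G' → GaugeEquivWith D G' G'' → GaugeEquivWith (C * D) G G''
  | ⟨T, h⟩, ⟨T', h'⟩ => by
    refine ⟨T.trans T', fun x => ⟨?_, ?_⟩⟩
    · calc G'' (T' (T x)) ≤ D * G' (T x) := (h' _).1
        _ ≤ D * (C * G x) := by gcongr; exact (h x).1
        _ = (C * D : ℝ≥0) * G x := by push_cast; ring
    · calc G x ≤ C * G' (T x) := (h x).2
        _ ≤ C * (D * G'' (T' (T x))) := by gcongr; exact (h' _).2
        _ = (C * D : ℝ≥0) * G'' (T' (T x)) := by push_cast; ring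

lemma GaugeEquiv.refl (G : V → ℝ≥0∞) : G ≃ᵍ G :=
  gaugeEquiv_of_eq (.refl ℝ V) fun _ => rfl

lemma GaugeEquiv.symm : G ≃ᵍ G' → G' ≃ᵍ G
  | ⟨_, h⟩ => h.symm.gaugeEquiv

lemma GaugeEquiv.trans : G ≃ᵍ G' → G' ≃ᵍ G'' → G ≃ᵍ G''
  | ⟨_, h⟩, ⟨_, h'⟩ => (h.trans h').gaugeEquiv

instance : Trans (GaugeEquiv (V := V) (V' := V')) (GaugeEquiv (V := V') (V' := V''))
    (GaugeEquiv (V := V) (V' := V'')) :=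
  ⟨GaugeEquiv.trans⟩

lemma GaugeEquiv.prod : G ≃ᵍ G' → H ≃ᵍ H' → G ⊕ₚ H ≃ᵍ G' ⊕ₚ H'
  | ⟨C, T, h⟩, ⟨D, S, h'⟩ => by
    refine ⟨C + D, T.prodCongr S, fun x => ⟨?_, ?_⟩⟩
    · calc G' (T x.1) + H' (S x.2) ≤ C * G x.1 + D * H x.2 := add_le_add (h _).1 (h' _).1
        _ ≤ (C + D) * G x.1 + (C + D) * H x.2 := by gcongr <;> simp
        _ = (C + D : ℝ≥0) * (G ⊕ₚ H) x := by simp [prodGauge, mul_add]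
    · calc G x.1 + H x.2 ≤ C * G' (T x.1) + D * H' (S x.2) := add_le_add (h _).2 (h' _).2
        _ ≤ (C + D) * G' (T x.1) + (C + D) * H' (S x.2) := by gcongr <;> simp
        _ = (C + D : ℝ≥0) * (G' ⊕ₚ H') (T.prodCongr S x) := by simp [prodGauge, mul_add]

lemma GaugeEquiv.prod_left (h : GaugeEquiv G G') (H : U → ℝ≥0∞) : G ⊕ₚ H ≃ᵍ G' ⊕ₚ H :=
  h.prod (.refl H)

lemma GaugeEquiv.prod_right (G : V → ℝ≥0∞) (h : GaugeEquiv H H') : G ⊕ₚ H ≃ᵍ G ⊕ₚ H' :=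
  (GaugeEquiv.refl G).prod h

lemma prodGauge_comm (G : V → ℝ≥0∞) (G' : V' → ℝ≥0∞) : G ⊕ₚ G' ≃ᵍ G' ⊕ₚ G :=
  gaugeEquiv_of_eq (.prodComm ℝ V V') fun _ => add_comm _ _

lemma prodGauge_assoc (G : V → ℝ≥0∞) (G' : V' → ℝ≥0∞) (G'' : V'' → ℝ≥0∞) :
    G ⊕ₚ G' ⊕ₚ G'' ≃ᵍ G ⊕ₚ (G' ⊕ₚ G'') :=
  gaugeEquiv_of_eq (.prodAssoc ℝ V V' V'') fun _ => (add_assoc _ _ _).symm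

variable {ι κ : Type*} {E F : ι → Type*} [∀ i, AddCommGroup (E i)] [∀ i, Module ℝ (E i)]
  [∀ i, AddCommGroup (F i)] [∀ i, Module ℝ (F i)]

/-- Equivalence of each `A i` with `B i` would not suffice: the constants might be unbounded. -/
lemma sumGauge_congr {A : ∀ i, E i → ℝ≥0∞} {B : ∀ i, F i → ℝ≥0∞}
    (h : ∀ i, GaugeEquivWith C (A i) (B i)) : sumGauge A ≃ᵍ sumGauge B := by
  choose T hT using h
  refine ⟨C, .piCongrRight T, fun x => ⟨?_, ?_⟩⟩
  · rw [sumGauge, sumGauge, ← ENNReal.tsum_mul_left]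
    exact ENNReal.tsum_le_tsum fun i => (hT i _).1
  · rw [sumGauge, sumGauge, ← ENNReal.tsum_mul_left]
    exact ENNReal.tsum_le_tsum fun i => (hT i _).2

lemma sumGauge_reindex (e : κ ≃ ι) (A : ∀ i, E i → ℝ≥0∞) :
    sumGauge A ≃ᵍ sumGauge fun k => A (e k) :=
  gaugeEquiv_of_eq (LinearEquiv.piCongrLeft ℝ E e).symm fun x => e.tsum_eq fun i => A i (x i)

lemma sumGauge_const_equiv_nat [Countable κ] [Infinite κ] (G : V → ℝ≥0∞) :
    (sumGauge fun _ : κ => G) ≃ᵍ sumGauge fun _ : ℕ => G :=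
  sumGauge_reindex nonempty_equiv_of_countable.some _

lemma sumGauge_sumType {E : ι ⊕ κ → Type*} [∀ i, AddCommGroup (E i)] [∀ i, Module ℝ (E i)]
    (A : ∀ i, E i → ℝ≥0∞) :
    sumGauge A ≃ᵍ (sumGauge fun i => A (.inl i)) ⊕ₚ sumGauge fun k => A (.inr k) :=
  gaugeEquiv_of_eq (LinearEquiv.sumPiEquivProdPi ℝ ι κ E) fun x =>
    (Summable.tsum_sum (f := fun i => A i (x i)) ENNReal.summable ENNReal.summable).symm

lemma sumGauge_subtype_compl (s : ι → Prop) (A : ∀ i, E i → ℝ≥0∞) :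
    sumGauge A ≃ᵍ (sumGauge fun i : {i // s i} => A i) ⊕ₚ sumGauge fun i : {i // ¬ s i} => A i := by
  classical
  exact (sumGauge_reindex (Equiv.sumCompl s) A).trans
    (sumGauge_sumType fun i => A (Equiv.sumCompl s i))

lemma sumGauge_sigma {κ : ι → Type*} {E : ∀ i, κ i → Type*} [∀ i k, AddCommGroup (E i k)]
    [∀ i k, Module ℝ (E i k)] (A : ∀ i k, E i k → ℝ≥0∞) :
    (sumGauge fun i : Σ i, κ i => A i.1 i.2) ≃ᵍ sumGauge fun i => sumGauge (A i) :=
  gaugeEquiv_of_eq (LinearEquiv.piCurry ℝ E) fun x =>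
    (ENNReal.tsum_sigma fun i k => A i k (x ⟨i, k⟩)).symm

lemma sumGauge_prodGauge (A : ∀ i, E i → ℝ≥0∞) (B : ∀ i, F i → ℝ≥0∞) :
    (sumGauge fun i => A i ⊕ₚ B i) ≃ᵍ sumGauge A ⊕ₚ sumGauge B :=
  gaugeEquiv_of_eq
    { toFun := fun x => (fun i => (x i).1, fun i => (x i).2)
      invFun := fun x i => (x.1 i, x.2 i)
      map_add' := fun _ _ => rfl
      map_smul' := fun _ _ => rfl } fun _ => ENNReal.tsum_add.symm

lemma sumGauge_unique [Unique ι] (G : V → ℝ≥0∞) : (sumGauge fun _ : ι => G) ≃ᵍ G :=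
  gaugeEquiv_of_eq (LinearEquiv.funUnique ι ℝ V) fun x => by
    simp [sumGauge, tsum_fintype]

lemma prodGauge_sumGauge_nat (G : V → ℝ≥0∞) :
    (G ⊕ₚ sumGauge fun _ : ℕ => G) ≃ᵍ sumGauge fun _ : ℕ => G :=
  calc (G ⊕ₚ sumGauge fun _ : ℕ => G)
      ≃ᵍ (sumGauge fun _ : Unit => G) ⊕ₚ sumGauge fun _ : ℕ => G :=
      (sumGauge_unique G).symm.prod_left _
    _ ≃ᵍ sumGauge fun _ : Unit ⊕ ℕ => G := (sumGauge_sumType fun _ => G).symm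
    _ ≃ᵍ sumGauge fun _ : ℕ => G := sumGauge_const_equiv_nat G

/-- **Pełczyński decomposition method**. -/
lemma GaugeEquiv.of_complemented (hH : GaugeEquiv H (sumGauge fun _ : ℕ => H))
    (hGH : G ⊕ₚ G' ≃ᵍ H) (hHG : H ⊕ₚ H' ≃ᵍ G) : G ≃ᵍ H := by
  have hHH : H ≃ᵍ H ⊕ₚ H :=
    calc H ≃ᵍ sumGauge fun _ : ℕ => H := hH
      _ ≃ᵍ H ⊕ₚ sumGauge fun _ : ℕ => H := (prodGauge_sumGauge_nat H).symm
      _ ≃ᵍ H ⊕ₚ H := hH.symm.prod_right H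
  have hG : G ≃ᵍ H ⊕ₚ G :=
    calc G ≃ᵍ H ⊕ₚ H' := hHG.symm
      _ ≃ᵍ H ⊕ₚ H ⊕ₚ H' := hHH.prod_left H'
      _ ≃ᵍ H ⊕ₚ (H ⊕ₚ H') := prodGauge_assoc H H H'
      _ ≃ᵍ H ⊕ₚ G := hHG.prod_right H
  have hsum : H ≃ᵍ (sumGauge fun _ : ℕ => G) ⊕ₚ sumGauge fun _ : ℕ => G' := by
    obtain ⟨C, hC⟩ := hGH
    calc H ≃ᵍ sumGauge fun _ : ℕ => H := hH
      _ ≃ᵍ sumGauge fun _ : ℕ => G ⊕ₚ G' := sumGauge_congr fun _ => hC.symm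
      _ ≃ᵍ (sumGauge fun _ : ℕ => G) ⊕ₚ sumGauge fun _ : ℕ => G' := sumGauge_prodGauge _ _
  calc G ≃ᵍ H ⊕ₚ G := hG
    _ ≃ᵍ G ⊕ₚ H := prodGauge_comm H G
    _ ≃ᵍ G ⊕ₚ ((sumGauge fun _ : ℕ => G) ⊕ₚ sumGauge fun _ : ℕ => G') := hsum.prod_right G
    _ ≃ᵍ (G ⊕ₚ sumGauge fun _ : ℕ => G) ⊕ₚ sumGauge fun _ : ℕ => G' :=
      (prodGauge_assoc _ _ _).symm
    _ ≃ᵍ (sumGauge fun _ : ℕ => G) ⊕ₚ sumGauge fun _ : ℕ => G' :=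
      (prodGauge_sumGauge_nat G).prod_left _
    _ ≃ᵍ H := hsum.symm

/-- The projection `J ∘ Q` splits off the range of `J`. -/
lemma gaugeEquivWith_prodGauge_ker {B : ℝ≥0} (hG : ∀ x y, G (x + y) ≤ B * (G x + G y))
    (hneg : ∀ x, G (-x) = G x) (J : V' →ₗ[ℝ] V) (Q : V →ₗ[ℝ] V') (hQJ : ∀ a, Q (J a) = a)
    (hJ : ∀ a, G (J a) ≤ C * G' a) (hQ : ∀ x, G' (Q x) ≤ D * G x) :
    GaugeEquivWith (D + B * (1 + C + C * D)) G (G' ⊕ₚ fun v : LinearMap.ker Q => G v) := by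
  refine ⟨LinearEquiv.ofLinearMap
    (Q.prod ((LinearMap.id - J ∘ₗ Q).codRestrict _ fun x => by simp [hQJ]))
    (J.coprod (LinearMap.ker Q).subtype) (by ext x <;> simp [hQJ]) (by ext; simp),
    fun x => ⟨?_, ?_⟩⟩
  · have hker : G (x - J (Q x)) ≤ B * (1 + C * D) * G x :=
      calc G (x - J (Q x)) ≤ B * (G x + G (J (Q x))) := by
            simpa only [sub_eq_add_neg, hneg] using hG x (-J (Q x))
        _ ≤ B * (G x + C * (D * G x)) := by gcongr; exact (hJ _).trans (by gcongr; exact hQ x)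
        _ = B * (1 + C * D) * G x := by ring
    calc G' (Q x) + G (x - J (Q x)) ≤ D * G x + B * (1 + C * D) * G x := add_le_add (hQ x) hker
      _ = (D + B * (1 + C * D)) * G x := by ring
      _ ≤ (D + B * (1 + C + C * D) : ℝ≥0) * G x := by
        push_cast
        gcongr
        exact le_self_add
  · calc G x = G (J (Q x) + (x - J (Q x))) := by simp
      _ ≤ B * (C * G' (Q x) + G (x - J (Q x))) := (hG _ _).trans (by gcongr; exact hJ _)
      _ ≤ B * ((1 + C) * G' (Q x) + (1 + C) * G (x - J (Q x))) := by
        gcongr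
        · exact le_add_self
        · exact le_mul_of_one_le_left' le_self_add
      _ = B * (1 + C) * (G' (Q x) + G (x - J (Q x))) := by ring
      _ ≤ (D + B * (1 + C + C * D) : ℝ≥0) * (G' (Q x) + G (x - J (Q x))) := by
        push_cast
        gcongr
        exact (mul_le_mul_right le_self_add _).trans le_add_self

end Gauge

/-! ### Hilbert spaces -/

section Rpow

variable {ι : Type*} [Fintype ι] {q : ℝ}

lemma sum_rpow_le_card_mul_rpow_sum (hq : 0 ≤ q) (a : ι → ℝ≥0∞) :
    ∑ i, a i ^ q ≤ Fintype.card ι * (∑ i, a i) ^ q := by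
  refine (Finset.sum_le_card_nsmul Finset.univ _ ((∑ i, a i) ^ q) fun i _ => ?_).trans_eq (by simp)
  gcongr
  exact Finset.single_le_sum (fun _ _ => zero_le) (Finset.mem_univ i)

lemma rpow_sum_le_card_rpow_mul_sum_rpow (hq : 0 < q) (a : ι → ℝ≥0∞) :
    (∑ i, a i) ^ q ≤ (Fintype.card ι : ℝ≥0∞) ^ q * ∑ i, a i ^ q := by
  have h i : a i ≤ (∑ i, a i ^ q) ^ q⁻¹ := by
    rw [ENNReal.le_rpow_inv_iff hq]
    exact Finset.single_le_sum (f := fun i => a i ^ q) (fun _ _ => zero_le) (Finset.mem_univ i)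
  calc (∑ i, a i) ^ q ≤ (Fintype.card ι * (∑ i, a i ^ q) ^ q⁻¹) ^ q := by
        gcongr
        simpa using Finset.sum_le_card_nsmul Finset.univ a _ fun i _ => h i
    _ = Fintype.card ι ^ q * ∑ i, a i ^ q := by
        rw [ENNReal.mul_rpow_of_nonneg _ _ hq.le, ENNReal.rpow_inv_rpow hq.ne']

lemma rpow_add_rpow_le_two_mul_rpow_add (hq : 0 ≤ q) (a b : ℝ≥0∞) :
    a ^ q + b ^ q ≤ 2 * (a + b) ^ q := by
  simpa using sum_rpow_le_card_mul_rpow_sum hq ![a, b]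

lemma rpow_add_le_two_rpow_mul_rpow_add_rpow (hq : 0 < q) (a b : ℝ≥0∞) :
    (a + b) ^ q ≤ 2 ^ q * (a ^ q + b ^ q) := by
  simpa using rpow_sum_le_card_rpow_mul_sum_rpow hq ![a, b]

end Rpow

section Hilbert

variable {ι κ : Type*} {p : ℝ}

lemma lpGauge_reindex (p : ℝ) (e : ι ≃ κ) : lpGauge p ι ≃ᵍ lpGauge p κ :=
  sumGauge_reindex e.symm fun _ => scalarGauge p

lemma hilbertGauge_reindex (p : ℝ) (e : ι ≃ κ) :
    GaugeEquivWith 1 (hilbertGauge p ι) (hilbertGauge p κ) :=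
  gaugeEquivWith_one_of_eq (LinearEquiv.funCongrLeft ℝ ℝ e.symm) fun x =>
    congrArg (· ^ (p / 2)) (e.symm.tsum_eq fun i => ‖x i‖ₑ ^ 2)

lemma hilbertGauge_unique [Unique ι] (p : ℝ) :
    GaugeEquivWith 1 (hilbertGauge p ι) (scalarGauge p) :=
  gaugeEquivWith_one_of_eq (LinearEquiv.funUnique ι ℝ ℝ) fun x => by
    simp only [hilbertGauge, scalarGauge, tsum_fintype, Fintype.sum_unique,
      LinearEquiv.funUnique_apply, ← ENNReal.rpow_natCast, ← ENNReal.rpow_mul]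
    congr 1
    push_cast
    ring

lemma hilbertGauge_sumType (hp : 0 < p) (ι κ : Type*) :
    GaugeEquivWith (2 + 2 ^ (p / 2)) (hilbertGauge p (ι ⊕ κ))
      (hilbertGauge p ι ⊕ₚ hilbertGauge p κ) := by
  refine ⟨LinearEquiv.sumPiEquivProdPi ℝ ι κ _, fun x => ?_⟩
  have hx : ∑' j, ‖x j‖ₑ ^ 2 = ∑' i, ‖x (.inl i)‖ₑ ^ 2 + ∑' k, ‖x (.inr k)‖ₑ ^ 2 :=
    Summable.tsum_sum (f := fun j => ‖x j‖ₑ ^ 2) ENNReal.summable ENNReal.summable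
  have hC : ((2 + 2 ^ (p / 2) : ℝ≥0) : ℝ≥0∞) = 2 + 2 ^ (p / 2) := by
    push_cast [ENNReal.coe_rpow_of_nonneg _ (half_pos hp).le]
    rfl
  simp only [hilbertGauge, prodGauge, hx, hC]
  constructor
  · exact (rpow_add_rpow_le_two_mul_rpow_add (half_pos hp).le _ _).trans
      (mul_le_mul_left le_self_add _)
  · exact (rpow_add_le_two_rpow_mul_rpow_add_rpow (half_pos hp) _ _).trans
      (mul_le_mul_left le_add_self _)

lemma hilbertGauge_sigma (hp : 0 < p) [Finite ι] (κ : ι → Type*) :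
    hilbertGauge p (Σ i, κ i) ≃ᵍ sumGauge fun i => hilbertGauge p (κ i) := by
  have := Fintype.ofFinite ι
  refine ⟨Fintype.card ι + Fintype.card ι ^ (p / 2),
    LinearEquiv.piCurry ℝ fun i (_ : κ i) => ℝ, fun x => ?_⟩
  have hx : ∑' j, ‖x j‖ₑ ^ 2 = ∑ i, ∑' k, ‖x ⟨i, k⟩‖ₑ ^ 2 := by
    rw [← tsum_fintype (L := .unconditional _)]
    exact ENNReal.tsum_sigma' _
  have hC : ((Fintype.card ι + Fintype.card ι ^ (p / 2) : ℝ≥0) : ℝ≥0∞) =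
      Fintype.card ι + (Fintype.card ι : ℝ≥0∞) ^ (p / 2) := by
    push_cast [ENNReal.coe_rpow_of_nonneg _ (half_pos hp).le]
    rfl
  simp only [hilbertGauge, sumGauge, hx, hC, tsum_fintype]
  constructor
  · exact (sum_rpow_le_card_mul_rpow_sum (half_pos hp).le _).trans
      (mul_le_mul_left le_self_add _)
  · exact (rpow_sum_le_card_rpow_mul_sum_rpow (half_pos hp) _).trans
      (mul_le_mul_left le_add_self _)

lemma lpGauge_add_le (hp : 0 < p) (x y : ι → ℝ) :
    lpGauge p ι (x + y) ≤ (2 ^ p : ℝ≥0) * (lpGauge p ι x + lpGauge p ι y) := by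
  have h2 : ((2 ^ p : ℝ≥0) : ℝ≥0∞) = 2 ^ p := ENNReal.coe_rpow_of_nonneg _ hp.le
  simp only [lpGauge, sumGauge, ← ENNReal.tsum_add, h2, ← ENNReal.tsum_mul_left]
  refine ENNReal.tsum_le_tsum fun i => ?_
  calc ‖x i + y i‖ₑ ^ p ≤ (‖x i‖ₑ + ‖y i‖ₑ) ^ p := by
        gcongr
        exact enorm_add_le _ _
    _ ≤ 2 ^ p * (‖x i‖ₑ ^ p + ‖y i‖ₑ ^ p) := rpow_add_le_two_rpow_mul_rpow_add_rpow hp _ _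

lemma lpGauge_eq_ofReal (hp : 0 ≤ p) [Fintype ι] (x : ι → ℝ) :
    lpGauge p ι x = ENNReal.ofReal (∑ i, |x i| ^ p) := by
  rw [ENNReal.ofReal_sum_of_nonneg fun _ _ => by positivity]
  simp [lpGauge, sumGauge, scalarGauge, Real.enorm_eq_ofReal_abs,
    ENNReal.ofReal_rpow_of_nonneg, hp]

lemma hilbertGauge_eq_ofReal (hp : 0 ≤ p) [Fintype ι] (x : ι → ℝ) :
    hilbertGauge p ι x = ENNReal.ofReal ((∑ i, x i ^ 2) ^ (p / 2)) := by
  rw [hilbertGauge, ← ENNReal.ofReal_rpow_of_nonneg (Finset.sum_nonneg fun i _ => sq_nonneg _)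
    (by positivity), ENNReal.ofReal_sum_of_nonneg fun _ _ => sq_nonneg _]
  simp [Real.enorm_eq_ofReal_abs, ← ENNReal.ofReal_pow]

end Hilbert

/-! ### Khinchine's inequality and complemented Hilbert spaces -/

/-- The `i`-th column of this matrix is the `i`-th Rademacher function, i.e. the `i`-th coordinate
on the cube `{1, -1}^S`. -/
def rademacherMatrix (S : Type*) : Matrix (S → ℤˣ) S ℝ := .of fun ω i => ((ω i : ℤ) : ℝ)

/-- A constant for the upper Khinchine inequality with exponent `p`. It comes from bounding
`|x| ^ p` by `p ^ p * (exp x + exp (-x))`, and the moment generating function of a Rademacher sum of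
variance `1` at `±1` by `exp (1 / 2)`. -/
def khinchineConst (p : ℝ) : ℝ := 2 * p ^ p * Real.exp (1 / 2)

lemma khinchineConst_nonneg {p : ℝ} (hp : 0 ≤ p) : 0 ≤ khinchineConst p := by
  unfold khinchineConst
  positivity

section Rademacher

variable {S : Type*} [Fintype S] [DecidableEq S] {p q : ℝ}

lemma rademacherMatrix_transpose_mul_self :
    (rademacherMatrix S)ᵀ * rademacherMatrix S = (Fintype.card (S → ℤˣ) : ℝ) • 1 := by
  ext i j
  have hij : ((rademacherMatrix S)ᵀ * rademacherMatrix S) i j =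
      ∑ ω : S → ℤˣ, ((ω i * ω j : ℤˣ) : ℝ) := by
    simp [Matrix.mul_apply, rademacherMatrix]
  rw [hij, Matrix.smul_apply, smul_eq_mul]
  rcases eq_or_ne i j with rfl | hne
  · simp
  -- Flipping the sign of `ω i` changes the sign of the sum.
  have hflip := Equiv.sum_comp (Equiv.mulRight (Pi.mulSingle i (-1) : S → ℤˣ))
    fun ω => ((ω i * ω j : ℤˣ) : ℝ)
  simp only [Equiv.coe_mulRight, Pi.mul_apply, Pi.mulSingle_eq_same, Pi.mulSingle_eq_of_ne hne.symm,
    mul_one, mul_neg, neg_mul, Units.val_neg, Int.cast_neg, Finset.sum_neg_distrib] at hflip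
  rw [Matrix.one_apply_ne hne, mul_zero]
  linarith

lemma sum_exp_mul_rademacherMatrix_mulVec_le (t : ℝ) (a : S → ℝ) :
    ∑ ω, Real.exp (t * (rademacherMatrix S *ᵥ a) ω) ≤
      Fintype.card (S → ℤˣ) * Real.exp (t ^ 2 * (∑ i, a i ^ 2) / 2) := by
  calc ∑ ω, Real.exp (t * (rademacherMatrix S *ᵥ a) ω)
      = ∑ ω : S → ℤˣ, ∏ i, Real.exp (((ω i : ℤ) : ℝ) * (t * a i)) :=
        Finset.sum_congr rfl fun ω _ => by
          simp [Matrix.mulVec, dotProduct, rademacherMatrix, ← Real.exp_sum, Finset.mul_sum,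
            mul_left_comm]
    _ = ∏ i, (2 * Real.cosh (t * a i)) := by
        rw [← Fintype.prod_sum fun i (u : ℤˣ) => Real.exp (((u : ℤ) : ℝ) * (t * a i))]
        refine Finset.prod_congr rfl fun i _ => ?_
        rw [Real.cosh_eq, UnitsInt.univ, Finset.sum_pair (by decide)]
        simp only [Units.val_one, Units.val_neg, Int.cast_one, Int.cast_neg, one_mul, neg_mul]
        ring
    _ ≤ ∏ i, (2 * Real.exp ((t * a i) ^ 2 / 2)) := by
        gcongr with i
        exact Real.cosh_le_exp_half_sq _
    _ = Fintype.card (S → ℤˣ) * Real.exp (t ^ 2 * (∑ i, a i ^ 2) / 2) := by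
        simp [Finset.prod_mul_distrib, Finset.sum_div, Finset.mul_sum, Real.exp_sum, mul_pow]

lemma khinchine_upper (hp : 0 < p) (a : S → ℝ) :
    ∑ ω, |(rademacherMatrix S *ᵥ a) ω| ^ p ≤
      khinchineConst p * Fintype.card (S → ℤˣ) * (∑ i, a i ^ 2) ^ (p / 2) := by
  have hnonneg : 0 ≤ ∑ i, a i ^ 2 := Finset.sum_nonneg fun i _ => sq_nonneg _
  rcases hnonneg.eq_or_lt with hzero | hpos
  · have ha : a = 0 := by
      ext i
      simpa using (Finset.sum_eq_zero_iff_of_nonneg fun i _ => sq_nonneg (a i)).1 hzero.symm i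
    simp [ha, Real.zero_rpow hp.ne', Real.zero_rpow (half_pos hp).ne']
  set r := √(∑ i, a i ^ 2)
  have hr : 0 < r := Real.sqrt_pos.2 hpos
  have hr2 : r ^ 2 = ∑ i, a i ^ 2 := Real.sq_sqrt hnonneg
  have hexp (t : ℝ) (ht : t ^ 2 * r ^ 2 = 1) :
      ∑ ω, Real.exp (t * (rademacherMatrix S *ᵥ a) ω) ≤
        Fintype.card (S → ℤˣ) * Real.exp (1 / 2) := by
    simpa only [← hr2, ht] using sum_exp_mul_rademacherMatrix_mulVec_le t a
  calc ∑ ω, |(rademacherMatrix S *ᵥ a) ω| ^ p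
      ≤ ∑ ω, (p * r) ^ p * (Real.exp (r⁻¹ * (rademacherMatrix S *ᵥ a) ω) +
          Real.exp (-r⁻¹ * (rademacherMatrix S *ᵥ a) ω)) := by
        gcongr with ω
        refine (ProbabilityTheory.rpow_abs_le_mul_max_exp_of_pos _ hp.le (inv_pos.2 hr)).trans ?_
        rw [div_inv_eq_mul]
        gcongr
        exact max_le_add_of_nonneg (Real.exp_nonneg _) (Real.exp_nonneg _)
    _ ≤ (p * r) ^ p * (Fintype.card (S → ℤˣ) * Real.exp (1 / 2) +
          Fintype.card (S → ℤˣ) * Real.exp (1 / 2)) := by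
        rw [← Finset.mul_sum, Finset.sum_add_distrib]
        gcongr <;> exact hexp _ (by field_simp)
    _ = khinchineConst p * Fintype.card (S → ℤˣ) * (∑ i, a i ^ 2) ^ (p / 2) := by
        rw [← hr2, ← Real.rpow_natCast, ← Real.rpow_mul hr.le, Nat.cast_ofNat,
          mul_div_cancel₀ p two_ne_zero, Real.mul_rpow hp.le hr.le, khinchineConst]
        ring

lemma sum_sq_rademacherMatrix_transpose_mulVec_le (hpq : p.HolderConjugate q)
    (f : (S → ℤˣ) → ℝ) :
    ∑ i, ((rademacherMatrix S)ᵀ *ᵥ f) i ^ 2 ≤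
      (khinchineConst q * Fintype.card (S → ℤˣ) *
        (∑ i, ((rademacherMatrix S)ᵀ *ᵥ f) i ^ 2) ^ (q / 2)) ^ (1 / q) *
        (∑ ω, |f ω| ^ p) ^ (1 / p) := by
  set b := (rademacherMatrix S)ᵀ *ᵥ f
  calc ∑ i, b i ^ 2 = rademacherMatrix S *ᵥ b ⬝ᵥ f := by
        rw [dotProduct_comm, Matrix.dotProduct_mulVec, ← Matrix.mulVec_transpose]
        simp [dotProduct, pow_two, b]
    _ ≤ (∑ ω, |(rademacherMatrix S *ᵥ b) ω| ^ q) ^ (1 / q) * (∑ ω, |f ω| ^ p) ^ (1 / p) :=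
        Real.inner_le_Lp_mul_Lq _ _ _ hpq.symm
    _ ≤ _ := by
        have := hpq.symm.pos
        gcongr
        exact khinchine_upper this b

lemma rpow_half_le_of_le_mul_rpow_half (hpq : p.HolderConjugate q) {s L F : ℝ} (hs : 0 ≤ s)
    (hL : 0 ≤ L) (hF : 0 ≤ F) (h : s ≤ (L * s ^ (q / 2)) ^ (1 / q) * F ^ (1 / p)) :
    s ^ (p / 2) ≤ L ^ (p - 1) * F := by
  rcases hs.eq_or_lt with rfl | hpos
  · rw [Real.zero_rpow (half_pos hpq.pos).ne']
    positivity
  have hexp : q / 2 * (p - 1) = p / 2 := by linarith [hpq.mul_eq_add]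
  refine le_of_mul_le_mul_right ?_ (Real.rpow_pos_of_pos hpos (p / 2))
  calc s ^ (p / 2) * s ^ (p / 2) = s ^ p := by rw [← Real.rpow_add hpos, add_halves]
    _ ≤ ((L * s ^ (q / 2)) ^ (1 / q) * F ^ (1 / p)) ^ p := by
        have := hpq.nonneg
        gcongr
    _ = (L * s ^ (q / 2)) ^ (p - 1) * F := by
        rw [Real.mul_rpow (by positivity) (by positivity), ← Real.rpow_mul (by positivity),
          ← Real.rpow_mul hF, one_div_mul_cancel hpq.ne_zero, Real.rpow_one, one_div_mul_eq_div,
          hpq.div_conj_eq_sub_one]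
    _ = L ^ (p - 1) * F * s ^ (p / 2) := by
        rw [Real.mul_rpow hL (by positivity), ← Real.rpow_mul hs, hexp]
        ring

/-- Dual to `khinchine_upper` for the conjugate exponent `q`. -/
lemma rpow_sum_sq_rademacherMatrix_transpose_mulVec_le (hpq : p.HolderConjugate q)
    (f : (S → ℤˣ) → ℝ) :
    (∑ i, ((rademacherMatrix S)ᵀ *ᵥ f) i ^ 2) ^ (p / 2) ≤
      (khinchineConst q * Fintype.card (S → ℤˣ)) ^ (p - 1) * ∑ ω, |f ω| ^ p :=
  rpow_half_le_of_le_mul_rpow_half hpq (Finset.sum_nonneg fun _ _ => sq_nonneg _)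
    (mul_nonneg (khinchineConst_nonneg hpq.symm.nonneg) (Nat.cast_nonneg _))
    (Finset.sum_nonneg fun _ _ => by positivity) (sum_sq_rademacherMatrix_transpose_mulVec_le hpq f)

end Rademacher

section Complemented

/-- The embedding of `ℓ_2(S)` into `L_p` of the cube by Rademacher sums, where `L_p` is identified
with `ℓ_p` by rescaling. -/
def rademacherSum (p : ℝ) (S : Type*) [Fintype S] [DecidableEq S] :
    (S → ℝ) →ₗ[ℝ] ((S → ℤˣ) → ℝ) :=
  (Fintype.card (S → ℤˣ) : ℝ) ^ (-p⁻¹) • (rademacherMatrix S).mulVecLin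

/-- The Rademacher coefficients of a function on the cube, scaled to give a left inverse of
`rademacherSum`. -/
def rademacherCoeff (p : ℝ) (S : Type*) [Fintype S] [DecidableEq S] :
    ((S → ℤˣ) → ℝ) →ₗ[ℝ] (S → ℝ) :=
  (Fintype.card (S → ℤˣ) : ℝ) ^ (p⁻¹ - 1) • (rademacherMatrix S)ᵀ.mulVecLin

variable {S : Type*} [Fintype S] [DecidableEq S] {p q : ℝ}

lemma rademacherCoeff_rademacherSum (a : S → ℝ) :
    rademacherCoeff p S (rademacherSum p S a) = a := by
  have hN : (0 : ℝ) < Fintype.card (S → ℤˣ) := by positivity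
  have hexp : p⁻¹ - 1 + -p⁻¹ + 1 = 0 := by ring
  rw [rademacherCoeff, rademacherSum, LinearMap.smul_apply, LinearMap.smul_apply, map_smul,
    Matrix.mulVecLin_apply, Matrix.mulVecLin_apply, Matrix.mulVec_mulVec,
    rademacherMatrix_transpose_mul_self, Matrix.smul_mulVec, Matrix.one_mulVec, smul_smul,
    smul_smul, ← Real.rpow_add hN, ← Real.rpow_add_one hN.ne', hexp,
    Real.rpow_zero, one_smul]

lemma lpGauge_rademacherSum_le (hp : 0 < p) (a : S → ℝ) :
    lpGauge p (S → ℤˣ) (rademacherSum p S a) ≤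
      (khinchineConst p).toNNReal * hilbertGauge p S a := by
  have hN : (0 : ℝ) < Fintype.card (S → ℤˣ) := by positivity
  have hK := khinchineConst_nonneg hp.le
  rw [lpGauge_eq_ofReal hp.le, hilbertGauge_eq_ofReal hp.le, ← ENNReal.ofReal,
    ← ENNReal.ofReal_mul hK]
  refine ENNReal.ofReal_le_ofReal ?_
  set N := (Fintype.card (S → ℤˣ) : ℝ)
  calc ∑ ω, |rademacherSum p S a ω| ^ p
      = N⁻¹ * ∑ ω, |(rademacherMatrix S *ᵥ a) ω| ^ p := by
        rw [Finset.mul_sum]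
        refine Finset.sum_congr rfl fun ω _ => ?_
        change |N ^ (-p⁻¹) * _| ^ p = _
        rw [abs_mul, Real.mul_rpow (abs_nonneg _) (abs_nonneg _), Real.abs_rpow_of_nonneg hN.le,
          abs_of_pos hN, ← Real.rpow_mul hN.le, neg_mul, inv_mul_cancel₀ hp.ne', Real.rpow_neg_one]
        rfl
    _ ≤ N⁻¹ * (khinchineConst p * N * (∑ i, a i ^ 2) ^ (p / 2)) := by
        gcongr
        exact khinchine_upper hp a
    _ = khinchineConst p * (∑ i, a i ^ 2) ^ (p / 2) := by field_simp

lemma hilbertGauge_rademacherCoeff_le (hpq : p.HolderConjugate q) (f : (S → ℤˣ) → ℝ) :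
    hilbertGauge p S (rademacherCoeff p S f) ≤
      (khinchineConst q ^ (p - 1)).toNNReal * lpGauge p (S → ℤˣ) f := by
  have hN : (0 : ℝ) < Fintype.card (S → ℤˣ) := by positivity
  have hK := khinchineConst_nonneg hpq.symm.nonneg
  rw [lpGauge_eq_ofReal hpq.nonneg, hilbertGauge_eq_ofReal hpq.nonneg, ← ENNReal.ofReal,
    ← ENNReal.ofReal_mul (by positivity)]
  refine ENNReal.ofReal_le_ofReal ?_
  have hsum := Finset.sum_nonneg fun i (_ : i ∈ Finset.univ) =>
    sq_nonneg (((rademacherMatrix S)ᵀ *ᵥ f) i)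
  set N := (Fintype.card (S → ℤˣ) : ℝ)
  calc (∑ i, rademacherCoeff p S f i ^ 2) ^ (p / 2)
      = ((N ^ (p⁻¹ - 1)) ^ 2 * ∑ i, ((rademacherMatrix S)ᵀ *ᵥ f) i ^ 2) ^ (p / 2) := by
        rw [Finset.mul_sum]
        simp only [← mul_pow]
        rfl
    _ = N ^ (1 - p) * (∑ i, ((rademacherMatrix S)ᵀ *ᵥ f) i ^ 2) ^ (p / 2) := by
        rw [Real.mul_rpow (by positivity) hsum, ← Real.rpow_natCast,
          ← Real.rpow_mul (by positivity), ← Real.rpow_mul hN.le, Nat.cast_ofNat,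
          mul_div_cancel₀ p two_ne_zero, sub_mul, inv_mul_cancel₀ hpq.ne_zero, one_mul]
    _ ≤ N ^ (1 - p) * ((khinchineConst q * N) ^ (p - 1) * ∑ ω, |f ω| ^ p) := by
        gcongr
        exact rpow_sum_sq_rademacherMatrix_transpose_mulVec_le hpq f
    _ = khinchineConst q ^ (p - 1) * ∑ ω, |f ω| ^ p := by
        rw [Real.mul_rpow hK hN.le, ← neg_sub, Real.rpow_neg hN.le]
        field_simp

end Complemented

lemma exists_hilbertGauge_complemented {p : ℝ} (hp : 1 < p) :
    ∃ C : ℝ≥0, ∀ (S : Type*) [Finite S], ∃ (K : Submodule ℝ ((S → ℤˣ) → ℝ)) (G : K → ℝ≥0∞),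
      GaugeEquivWith C (hilbertGauge p S ⊕ₚ G) (lpGauge p (S → ℤˣ)) := by
  classical
  have hpq := Real.HolderConjugate.conjExponent hp
  let C := (khinchineConst p).toNNReal
  let D := (khinchineConst p.conjExponent ^ (p - 1)).toNNReal
  refine ⟨D + 2 ^ p * (1 + C + C * D), fun S _ => ?_⟩
  have := Fintype.ofFinite S
  exact ⟨_, _, (gaugeEquivWith_prodGauge_ker (lpGauge_add_le hpq.pos)
    (fun x => by simp [lpGauge, sumGauge, scalarGauge]) (rademacherSum p S) (rademacherCoeff p S)
    rademacherCoeff_rademacherSum (lpGauge_rademacherSum_le hpq.pos)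
    (hilbertGauge_rademacherCoeff_le hpq)).symm⟩

/-! ### Sums of Hilbert spaces -/

section SumHilbert

variable {κ : Type*} {p : ℝ}

lemma lpGauge_nat_equiv_sumGauge (p : ℝ) : lpGauge p ℕ ≃ᵍ sumGauge fun _ : ℕ => lpGauge p ℕ :=
  (lpGauge_reindex p (nonempty_equiv_of_countable (β := Σ _ : ℕ, ℕ)).some).trans <|
    sumGauge_sigma fun _ _ => scalarGauge p

lemma sumGauge_hilbertGauge_split_points (hp : 0 < p) (S : κ → Type*) (s : ∀ k, S k) :
    (sumGauge fun k => hilbertGauge p (S k)) ≃ᵍ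
      lpGauge p κ ⊕ₚ sumGauge fun k => hilbertGauge p {i : S k // i ≠ s k} := by
  classical
  have hsplit (k : κ) : GaugeEquivWith _ (hilbertGauge p (S k))
      (hilbertGauge p {i : S k // i ≠ s k} ⊕ₚ hilbertGauge p PUnit.{1}) :=
    (hilbertGauge_reindex p ((Equiv.optionSubtypeNe (s k)).symm.trans
      (Equiv.optionEquivSumPUnit _))).trans (hilbertGauge_sumType hp _ _)
  calc (sumGauge fun k => hilbertGauge p (S k))
      ≃ᵍ sumGauge fun k => hilbertGauge p {i : S k // i ≠ s k} ⊕ₚ hilbertGauge p PUnit.{1} :=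
      sumGauge_congr hsplit
    _ ≃ᵍ (sumGauge fun k => hilbertGauge p {i : S k // i ≠ s k}) ⊕ₚ
          sumGauge fun _ : κ => hilbertGauge p PUnit.{1} := sumGauge_prodGauge _ _
    _ ≃ᵍ (sumGauge fun k => hilbertGauge p {i : S k // i ≠ s k}) ⊕ₚ lpGauge p κ :=
      (sumGauge_congr fun _ => hilbertGauge_unique p).prod_right _
    _ ≃ᵍ lpGauge p κ ⊕ₚ sumGauge fun k => hilbertGauge p {i : S k // i ≠ s k} :=
      prodGauge_comm _ _

variable [Countable κ]

lemma sumGauge_hilbertGauge_const [Infinite κ] (S : κ → Type*) [∀ k, Countable (S k)]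
    [∀ k, Infinite (S k)] :
    (sumGauge fun k => hilbertGauge p (S k)) ≃ᵍ sumGauge fun _ : ℕ => hilbertGauge p ℕ :=
  (sumGauge_congr fun _ => hilbertGauge_reindex p nonempty_equiv_of_countable.some).trans
    (sumGauge_const_equiv_nat (hilbertGauge p ℕ))

lemma sumGauge_hilbertGauge_of_finite (hp : 1 < p) [Infinite κ] (S : κ → Type*)
    [∀ k, Finite (S k)] [∀ k, Nonempty (S k)] :
    (sumGauge fun k => hilbertGauge p (S k)) ≃ᵍ lpGauge p ℕ := by
  obtain ⟨C, hC⟩ := exists_hilbertGauge_complemented hp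
  choose K G hG using fun k => hC (S k)
  have : Infinite (Σ k, S k → ℤˣ) :=
    .of_surjective Sigma.fst fun k => ⟨⟨k, 1⟩, rfl⟩
  have hcompl : (sumGauge fun k => hilbertGauge p (S k)) ⊕ₚ sumGauge G ≃ᵍ lpGauge p ℕ :=
    calc (sumGauge fun k => hilbertGauge p (S k)) ⊕ₚ sumGauge G
        ≃ᵍ sumGauge fun k => hilbertGauge p (S k) ⊕ₚ G k := (sumGauge_prodGauge _ _).symm
      _ ≃ᵍ sumGauge fun k => lpGauge p (S k → ℤˣ) := sumGauge_congr hG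
      _ ≃ᵍ lpGauge p (Σ k, S k → ℤˣ) :=
        (sumGauge_sigma fun (k : κ) (_ : S k → ℤˣ) => scalarGauge p).symm
      _ ≃ᵍ lpGauge p ℕ := lpGauge_reindex p nonempty_equiv_of_countable.some
  let s (k : κ) : S k := Classical.arbitrary _
  have hpoints : lpGauge p ℕ ⊕ₚ (sumGauge fun k => hilbertGauge p {i : S k // i ≠ s k}) ≃ᵍ
      sumGauge fun k => hilbertGauge p (S k) :=
    ((sumGauge_hilbertGauge_split_points (by linarith) S s).trans
      ((lpGauge_reindex p nonempty_equiv_of_countable.some).prod_left _)).symm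
  exact (lpGauge_nat_equiv_sumGauge p).of_complemented hcompl hpoints

lemma sumGauge_hilbertGauge_absorb (hp : 0 < p) (S : κ → Type*) [∀ k, Countable (S k)] :
    (sumGauge fun _ : ℕ => hilbertGauge p ℕ) ⊕ₚ (sumGauge fun k => hilbertGauge p (S k)) ≃ᵍ
      sumGauge fun _ : ℕ => hilbertGauge p ℕ := by
  have hcopies : (sumGauge fun _ : ℕ => hilbertGauge p ℕ) ≃ᵍ
      (sumGauge fun _ : ℕ => hilbertGauge p ℕ) ⊕ₚ sumGauge fun _ : κ => hilbertGauge p ℕ :=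
    (sumGauge_const_equiv_nat (hilbertGauge p ℕ)).symm.trans
      (sumGauge_sumType fun _ : ℕ ⊕ κ => hilbertGauge p ℕ)
  have hblocks : (sumGauge fun _ : κ => hilbertGauge p ℕ) ≃ᵍ
      (sumGauge fun _ : κ => hilbertGauge p ℕ) ⊕ₚ sumGauge fun k => hilbertGauge p (S k) :=
    (sumGauge_congr fun k => (hilbertGauge_reindex p
      (nonempty_equiv_of_countable (α := ℕ) (β := ℕ ⊕ S k)).some).trans
      (hilbertGauge_sumType hp ℕ (S k))).trans (sumGauge_prodGauge _ _)
  calc (sumGauge fun _ : ℕ => hilbertGauge p ℕ) ⊕ₚ (sumGauge fun k => hilbertGauge p (S k))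
      ≃ᵍ (sumGauge fun _ : ℕ => hilbertGauge p ℕ) ⊕ₚ (sumGauge fun _ : κ => hilbertGauge p ℕ) ⊕ₚ
          sumGauge fun k => hilbertGauge p (S k) := hcopies.prod_left _
    _ ≃ᵍ (sumGauge fun _ : ℕ => hilbertGauge p ℕ) ⊕ₚ ((sumGauge fun _ : κ => hilbertGauge p ℕ) ⊕ₚ
          sumGauge fun k => hilbertGauge p (S k)) := prodGauge_assoc _ _ _
    _ ≃ᵍ (sumGauge fun _ : ℕ => hilbertGauge p ℕ) ⊕ₚ sumGauge fun _ : κ => hilbertGauge p ℕ :=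
      hblocks.symm.prod_right _
    _ ≃ᵍ sumGauge fun _ : ℕ => hilbertGauge p ℕ := hcopies.symm

lemma sumGauge_hilbertGauge_of_finite_index (hp : 0 < p) {ι : Type*} [Finite ι] (S : ι → Type*)
    [∀ i, Countable (S i)] [Infinite (Σ i, S i)] :
    (sumGauge fun i => hilbertGauge p (S i)) ≃ᵍ hilbertGauge p ℕ :=
  (hilbertGauge_sigma hp S).symm.trans
    (hilbertGauge_reindex p nonempty_equiv_of_countable.some).gaugeEquiv

lemma sumGauge_hilbertGauge_classification (hp : 1 < p) (S : κ → Type*) [∀ k, Countable (S k)]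
    [∀ k, Nonempty (S k)] [Infinite (Σ k, S k)] :
    (sumGauge fun k => hilbertGauge p (S k)) ≃ᵍ lpGauge p ℕ ∨
    (sumGauge fun k => hilbertGauge p (S k)) ≃ᵍ hilbertGauge p ℕ ∨
    (sumGauge fun k => hilbertGauge p (S k)) ≃ᵍ hilbertGauge p ℕ ⊕ₚ lpGauge p ℕ ∨
    (sumGauge fun k => hilbertGauge p (S k)) ≃ᵍ sumGauge fun _ : ℕ => hilbertGauge p ℕ := by
  classical
  have hp0 : 0 < p := by linarith
  rcases finite_or_infinite κ with _ | _
  · exact .inr (.inl (sumGauge_hilbertGauge_of_finite_index hp0 S))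
  have hsplit := sumGauge_subtype_compl (fun k => Infinite (S k)) fun k => hilbertGauge p (S k)
  have hinfinite (k : {k // Infinite (S k)}) : Infinite (S k) := k.2
  have hfinite (k : {k // ¬ Infinite (S k)}) : Finite (S k) := not_infinite_iff_finite.1 k.2
  rcases finite_or_infinite {k // Infinite (S k)} with _ | _
  · have : Infinite {k // ¬ Infinite (S k)} := not_finite_iff_infinite.1 fun _ =>
      have := Finite.of_equiv _ (Equiv.sumCompl fun k => Infinite (S k))
      not_finite κ
    have hlp := sumGauge_hilbertGauge_of_finite hp fun k : {k // ¬ Infinite (S k)} => S k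
    rcases isEmpty_or_nonempty {k // Infinite (S k)} with hempty | ⟨⟨k₀⟩⟩
    · have (k : κ) : Finite (S k) := not_infinite_iff_finite.1 fun h => hempty.elim ⟨k, h⟩
      exact .inl (sumGauge_hilbertGauge_of_finite hp S)
    · have : Infinite (Σ k : {k // Infinite (S k)}, S k) :=
        .of_injective (Sigma.mk k₀) sigma_mk_injective
      exact .inr (.inr (.inl (hsplit.trans
        ((sumGauge_hilbertGauge_of_finite_index hp0 _).prod hlp))))
  · exact .inr (.inr (.inr (hsplit.trans (((sumGauge_hilbertGauge_const _).prod_left _).trans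
      (sumGauge_hilbertGauge_absorb hp0 _)))))

end SumHilbert

/-! ### Realization by Banach spaces -/

/-- The normed space `E` is, up to equivalence of norms, the space of vectors `v` with `H v < ∞`,
where `H` is the `p`-th power of an extended norm. -/
def RealizesGauge {V : Type*} [AddCommGroup V] [Module ℝ V] (p : ℝ) (H : V → ℝ≥0∞) (E : Type*)
    [NormedAddCommGroup E] [NormedSpace ℝ E] : Prop :=
  ∃ (j : E →ₗ[ℝ] V) (D : ℝ≥0), (∀ e, H (j e) ≤ D * ‖e‖ₑ ^ p) ∧ (∀ e, ‖e‖ₑ ^ p ≤ D * H (j e)) ∧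
    ∀ v, H v < ⊤ → ∃ e, j e = v

section Lp

variable {ι : Type*} {q : ℝ≥0∞}

lemma lp_enorm_rpow [Fact (1 ≤ q)] {E : ι → Type*} [∀ i, NormedAddCommGroup (E i)]
    (hq : 0 < q.toReal) (f : lp E q) : ‖f‖ₑ ^ q.toReal = ∑' i, ‖f i‖ₑ ^ q.toReal := by
  have hsum := ENNReal.ofReal_tsum_of_nonneg (fun i => by positivity) ((lp.memℓp f).summable hq)
  simp only [← lp.norm_rpow_eq_tsum hq, ← ENNReal.ofReal_rpow_of_nonneg (norm_nonneg _) hq.le,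
    ofReal_norm] at hsum
  exact hsum

lemma memℓp_of_tsum_enorm_rpow_lt_top {E : ι → Type*} [∀ i, NormedAddCommGroup (E i)]
    {f : ∀ i, E i} (hf : ∑' i, ‖f i‖ₑ ^ q.toReal < ⊤) : Memℓp f q := by
  refine memℓp_gen ((ENNReal.summable_toReal hf.ne).congr fun i => ?_)
  rw [← ENNReal.toReal_rpow, toReal_enorm]

end Lp

section Realizes

variable {V V' E E' : Type*} [AddCommGroup V] [Module ℝ V] [AddCommGroup V'] [Module ℝ V']
  [NormedAddCommGroup E] [NormedSpace ℝ E] [NormedAddCommGroup E'] [NormedSpace ℝ E']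
  {p : ℝ} {H : V → ℝ≥0∞} {H' : V' → ℝ≥0∞} {ι : Type*}

lemma realizesGauge_real (p : ℝ) : RealizesGauge p (scalarGauge p) ℝ :=
  ⟨.id, 1, fun e => by simp [scalarGauge], fun e => by simp [scalarGauge], fun v _ => ⟨v, rfl⟩⟩

lemma realizesGauge_l2 (hp : 0 < p) (ι : Type*) :
    RealizesGauge p (hilbertGauge p ι) (lp (fun _ : ι => ℝ) 2) := by
  let j : lp (fun _ : ι => ℝ) 2 →ₗ[ℝ] ι → ℝ := .pi (lp.evalₗ _ _)
  have hj (f) : hilbertGauge p ι (j f) = ‖f‖ₑ ^ p := by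
    have hsum := lp_enorm_rpow (q := 2) (by simp) f
    simp only [ENNReal.toReal_ofNat, ENNReal.rpow_ofNat] at hsum
    calc hilbertGauge p ι (j f) = (‖f‖ₑ ^ 2) ^ (p / 2) := congrArg (· ^ (p / 2)) hsum.symm
      _ = ‖f‖ₑ ^ p := by
        rw [← ENNReal.rpow_ofNat, ← ENNReal.rpow_mul, mul_div_cancel₀ p two_ne_zero]
  refine ⟨j, 1, fun f => by simp [hj], fun f => by simp [hj], fun x hx => ?_⟩
  refine ⟨⟨x, memℓp_of_tsum_enorm_rpow_lt_top ?_⟩, rfl⟩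
  simpa using (ENNReal.rpow_lt_top_iff_of_pos (half_pos hp)).1 hx

lemma RealizesGauge.of_gaugeEquiv (h : GaugeEquiv H H') : RealizesGauge p H' E → RealizesGauge p H E
  | ⟨j, D, hle, hge, hsurj⟩ => by
    obtain ⟨C, T, hT⟩ := h
    have hTj (e : E) : T (T.symm (j e)) = j e := T.apply_symm_apply _
    refine ⟨T.symm.toLinearMap ∘ₗ j, C * D, fun e => ?_, fun e => ?_, fun v hv => ?_⟩
    · calc H (T.symm (j e)) ≤ C * H' (j e) := by simpa only [hTj] using (hT (T.symm (j e))).2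
        _ ≤ C * (D * ‖e‖ₑ ^ p) := by gcongr; exact hle e
        _ = (C * D : ℝ≥0) * ‖e‖ₑ ^ p := by push_cast; ring
    · calc ‖e‖ₑ ^ p ≤ D * H' (j e) := hge e
        _ ≤ D * (C * H (T.symm (j e))) := by
          gcongr
          simpa only [hTj] using (hT (T.symm (j e))).1
        _ = (C * D : ℝ≥0) * H (T.symm (j e)) := by push_cast; ring
    · obtain ⟨e, he⟩ := hsurj (T v)
        ((hT v).1.trans_lt (ENNReal.mul_lt_top ENNReal.coe_lt_top hv))
      exact ⟨e, by simp [he]⟩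

lemma RealizesGauge.prod (hp : 0 ≤ p) :
    RealizesGauge p H E → RealizesGauge p H' E' → RealizesGauge p (H ⊕ₚ H') (E × E')
  | ⟨j, C, hle, hge, hsurj⟩, ⟨j', D, hle', hge', hsurj'⟩ => by
    refine ⟨j.prodMap j', C + D, fun e => ?_, fun e => ?_, fun v hv => ?_⟩
    · calc H (j e.1) + H' (j' e.2) ≤ C * ‖e.1‖ₑ ^ p + D * ‖e.2‖ₑ ^ p :=
            add_le_add (hle _) (hle' _)
        _ ≤ C * ‖e‖ₑ ^ p + D * ‖e‖ₑ ^ p := by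
          gcongr
          · exact enorm_le_iff_norm_le.2 (norm_fst_le e)
          · exact enorm_le_iff_norm_le.2 (norm_snd_le e)
        _ = (C + D : ℝ≥0) * ‖e‖ₑ ^ p := by push_cast; ring
    · have hmax : ‖e‖ₑ ^ p ≤ ‖e.1‖ₑ ^ p + ‖e.2‖ₑ ^ p := by
        rcases max_choice ‖e.1‖ ‖e.2‖ with hm | hm <;>
          rw [← ofReal_norm e, Prod.norm_def, hm, ofReal_norm]
        · exact le_self_add
        · exact le_add_self
      calc ‖e‖ₑ ^ p ≤ C * H (j e.1) + D * H' (j' e.2) :=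
            hmax.trans (add_le_add (hge _) (hge' _))
        _ ≤ (C + D) * H (j e.1) + (C + D) * H' (j' e.2) := by gcongr <;> simp
        _ = (C + D : ℝ≥0) * (H ⊕ₚ H') (j.prodMap j' e) := by simp [prodGauge, mul_add]
    · obtain ⟨h, h'⟩ := ENNReal.add_lt_top.1 hv
      obtain ⟨e, he⟩ := hsurj _ h
      obtain ⟨e', he'⟩ := hsurj' _ h'
      exact ⟨(e, e'), Prod.ext he he'⟩

lemma RealizesGauge.lpSum [Fact (1 ≤ ENNReal.ofReal p)] (ι : Type*) :
    RealizesGauge p H E →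
      RealizesGauge p (sumGauge fun _ : ι => H) (lp (fun _ : ι => E) (ENNReal.ofReal p))
  | ⟨j, D, hle, hge, hsurj⟩ => by
    have hp : 0 < p := one_pos.trans_le (ENNReal.one_le_ofReal.1 Fact.out)
    have hq : (ENNReal.ofReal p).toReal = p := ENNReal.toReal_ofReal hp.le
    have hnorm (f : lp (fun _ : ι => E) (ENNReal.ofReal p)) : ‖f‖ₑ ^ p = ∑' i, ‖f i‖ₑ ^ p := by
      simpa only [hq] using lp_enorm_rpow (by rwa [hq]) f
    refine ⟨j.compLeft ι ∘ₗ .pi (lp.evalₗ _ _), D, fun f => ?_, fun f => ?_, fun v hv => ?_⟩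
    · rw [hnorm, ← ENNReal.tsum_mul_left]
      exact ENNReal.tsum_le_tsum fun i => hle _
    · rw [hnorm, sumGauge, ← ENNReal.tsum_mul_left]
      exact ENNReal.tsum_le_tsum fun i => hge _
    · choose f hf using fun i => hsurj (v i) ((ENNReal.le_tsum i).trans_lt hv)
      refine ⟨⟨f, memℓp_of_tsum_enorm_rpow_lt_top ?_⟩, funext hf⟩
      calc ∑' i, ‖f i‖ₑ ^ (ENNReal.ofReal p).toReal ≤ ∑' i, D * H (v i) :=
            ENNReal.tsum_le_tsum fun i => by simpa only [hq, hf] using hge (f i)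
        _ = D * sumGauge (fun _ => H) v := ENNReal.tsum_mul_left
        _ < ⊤ := ENNReal.mul_lt_top ENNReal.coe_lt_top hv

end Realizes

section PartitionWeight

variable {P : Set (Set α)} {W : α → ℝ} {p : ℝ} {E : Type*} [NormedAddCommGroup E] [NormedSpace ℝ E]

/-- The `p`-th power of `pwNorm`. -/
def pwGauge (p : ℝ) (P : Set (Set α)) (W : α → ℝ) (x : α → ℝ) : ℝ≥0∞ :=
  ∑' N : P, (∑' j : N.1, ENNReal.ofReal ((x j.1) ^ 2 * (W j.1) ^ 2)) ^ (p / 2)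

lemma famNorm_singleton_rpow (hp : p ≠ 0) (P : Set (Set α)) (W : α → ℝ) (x : α → ℝ) :
    famNorm p {(P, W)} x ^ p = pwGauge p P W x := by
  simp only [famNorm, Set.mem_singleton_iff, iSup_iSup_eq_left, pwNorm, pwGauge]
  rw [← ENNReal.rpow_mul, one_div_mul_cancel hp, ENNReal.rpow_one]

/-- A type is the disjoint union of the members of a partition. -/
def IsPartition.sigmaEquiv (hP : IsPartition P) : (Σ N : P, N.1) ≃ α :=
  Equiv.ofBijective (fun j => j.2.1) <| by
    constructor
    · rintro ⟨⟨N, hN⟩, j, hj⟩ ⟨⟨M, hM⟩, k, hk⟩ (rfl : j = k)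
      obtain rfl : N = M := hP.2.1.elim_set hN hM j hj hk
      rfl
    · intro a
      obtain ⟨N, hN, ha⟩ : a ∈ ⋃₀ P := hP.2.2 ▸ Set.mem_univ a
      exact ⟨⟨⟨N, hN⟩, a, ha⟩, rfl⟩

lemma pwGauge_equiv_sumGauge_hilbertGauge (p : ℝ) (hP : IsPartition P) (hW : ∀ a, W a ≠ 0) :
    pwGauge p P W ≃ᵍ sumGauge fun N : P => hilbertGauge p N.1 := by
  refine gaugeEquiv_of_eq ((LinearEquiv.piCongrRight fun a =>
    LinearEquiv.smulOfNeZero ℝ ℝ (W a) (hW a)).trans <|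
    (LinearEquiv.funCongrLeft ℝ ℝ hP.sigmaEquiv).trans <|
    LinearEquiv.piCurry ℝ fun (N : P) (_ : N.1) => ℝ) fun x => ?_
  refine tsum_congr fun N => congrArg (· ^ (p / 2)) (tsum_congr fun j => ?_)
  change ‖W j * x j‖ₑ ^ 2 = _
  rw [Real.enorm_eq_ofReal_abs, ← ENNReal.ofReal_pow (abs_nonneg _), sq_abs, mul_pow, mul_comm]

lemma RealizesGauge.exists_famNorm_le (hp : 0 < p) :
    RealizesGauge p (pwGauge p P W) E → ∃ (j : E →ₗ[ℝ] α → ℝ) (K : ℝ≥0), 0 < K ∧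
      (∀ e, famNorm p {(P, W)} (j e) ≤ K * ‖e‖ₑ) ∧ (∀ e, ‖e‖ₑ ≤ K * famNorm p {(P, W)} (j e)) ∧
      ∀ x, famNorm p {(P, W)} x < ⊤ → ∃ e, j e = x
  | ⟨j, D, hle, hge, hsurj⟩ => by
    set K : ℝ≥0 := (D + 1) ^ p⁻¹
    have hKp : (D : ℝ≥0∞) ≤ (K : ℝ≥0∞) ^ p := by
      rw [← ENNReal.coe_rpow_of_nonneg _ hp.le, NNReal.rpow_inv_rpow hp.ne']
      exact_mod_cast le_self_add
    refine ⟨j, K, by positivity, fun e => ?_, fun e => ?_, fun x hx => hsurj x ?_⟩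
    · rw [← ENNReal.rpow_le_rpow_iff hp, ENNReal.mul_rpow_of_nonneg _ _ hp.le,
        famNorm_singleton_rpow hp.ne']
      exact (hle e).trans (by gcongr)
    · rw [← ENNReal.rpow_le_rpow_iff hp, ENNReal.mul_rpow_of_nonneg _ _ hp.le,
        famNorm_singleton_rpow hp.ne']
      exact (hge e).trans (by gcongr)
    · rwa [← famNorm_singleton_rpow hp.ne', ENNReal.rpow_lt_top_iff_of_pos hp]

lemma RealizesGauge.isomorphicToPW (hp : 0 < p) (h : RealizesGauge p (pwGauge p P W) E) :
    IsomorphicToPW p {(P, W)} E := by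
  obtain ⟨j, K, hK, hle, hge, hrange⟩ := h.exists_famNorm_le hp
  have hzero : famNorm p {(P, W)} 0 = 0 := by simpa using hle 0
  have hj : Function.Injective j := (injective_iff_map_eq_zero j).2 fun e he => by
    simpa [he, hzero] using hge e
  set R := Function.invFun j
  have hR (e : E) : R (j e) = e := Function.leftInverse_invFun hj e
  refine ⟨R, (K⁻¹ : ℝ≥0), K, by positivity, fun x y hx hy => ?_, fun r x hx => ?_,
    fun e => ⟨j e, (hle e).trans_lt (ENNReal.mul_lt_top ENNReal.coe_lt_top enorm_lt_top), hR e⟩,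
    fun x hx => ?_⟩
  · obtain ⟨⟨e, rfl⟩, ⟨f, rfl⟩⟩ := hrange x hx, hrange y hy
    rw [← map_add, hR, hR, hR]
  · obtain ⟨e, rfl⟩ := hrange x hx
    rw [← map_smul, hR, hR]
  · obtain ⟨e, rfl⟩ := hrange x hx
    rw [hR, ofReal_norm, ENNReal.ofReal_coe_nnreal, ENNReal.ofReal_coe_nnreal,
      ENNReal.coe_inv hK.ne', mul_comm, ← div_eq_mul_inv]
    exact ⟨ENNReal.div_le_of_le_mul' (hle e), hge e⟩

end PartitionWeight

theorem statement1_general {A : Type*} [Countable A] [Infinite A] (p : ℝ) (hp : 1 < p)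
    [Fact (1 ≤ ENNReal.ofReal p)]
    (P : Set (Set A)) (W : A → ℝ) (hP : IsPartition P) (hW : ∀ a, W a ≠ 0) :
    IsomorphicToPW p {(P, W)} (lp (fun _ : ℕ => ℝ) (ENNReal.ofReal p)) ∨
    IsomorphicToPW p {(P, W)} (lp (fun _ : ℕ => ℝ) 2) ∨
    IsomorphicToPW p {(P, W)}
      ((lp (fun _ : ℕ => ℝ) 2) × (lp (fun _ : ℕ => ℝ) (ENNReal.ofReal p))) ∨
    IsomorphicToPW p {(P, W)}
      (lp (fun _ : ℕ => lp (fun _ : ℕ => ℝ) 2) (ENNReal.ofReal p)) := by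
  have hp0 : 0 < p := by linarith
  have : Infinite (Σ N : P, N.1) := hP.sigmaEquiv.infinite_iff.2 inferInstance
  have (N : P) : Nonempty N.1 := (hP.1 N.1 N.2).to_subtype
  have : Countable P :=
    have := hP.sigmaEquiv.injective.countable
    Function.Surjective.countable (f := Sigma.fst (β := fun N : P => N.1)) fun N =>
      ⟨⟨N, Classical.arbitrary _⟩, rfl⟩
  have hsum := pwGauge_equiv_sumGauge_hilbertGauge p hP hW
  have hlp := (realizesGauge_real p).lpSum ℕ
  have hl2 := realizesGauge_l2 hp0 ℕ
  rcases sumGauge_hilbertGauge_classification hp fun N : P => N.1 with h | h | h | h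
  · exact .inl ((hlp.of_gaugeEquiv (hsum.trans h)).isomorphicToPW hp0)
  · exact .inr (.inl ((hl2.of_gaugeEquiv (hsum.trans h)).isomorphicToPW hp0))
  · exact .inr (.inr (.inl
      (((hl2.prod hp0.le hlp).of_gaugeEquiv (hsum.trans h)).isomorphicToPW hp0)))
  · exact .inr (.inr (.inr (((hl2.lpSum ℕ).of_gaugeEquiv (hsum.trans h)).isomorphicToPW hp0)))

/-- For `p > 2`, a space whose norm is given by a single
partition–weight pair on a countably infinite set is isomorphic to `ℓ_p`, `ℓ_2`,
`ℓ_2 ⊕ ℓ_p` (max norm) or `(Σ ℓ_2)_{ℓ_p}`. -/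
theorem statement1 {A : Type*} [Countable A] [Infinite A] (p : ℝ) (hp : 2 < p)
    [Fact (1 ≤ ENNReal.ofReal p)]
    (P : Set (Set A)) (W : A → ℝ) (hP : IsPartition P) (hW : IsWeight W) :
    IsomorphicToPW p {(P, W)} (lp (fun _ : ℕ => ℝ) (ENNReal.ofReal p)) ∨
    IsomorphicToPW p {(P, W)} (lp (fun _ : ℕ => ℝ) 2) ∨
    IsomorphicToPW p {(P, W)}
      ((lp (fun _ : ℕ => ℝ) 2) × (lp (fun _ : ℕ => ℝ) (ENNReal.ofReal p))) ∨
    IsomorphicToPW p {(P, W)}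
      (lp (fun _ : ℕ => lp (fun _ : ℕ => ℝ) 2) (ENNReal.ofReal p)) :=
  statement1_general p (by linarith) P W hP fun a => (hW a).1.ne'
end
end

section
/- Let p > 2 and let X = X(𝒫) where 𝒫 = {(P_n, W_n) : 1 ≤ n ≤ N} is a finite family of partition–weight pairs on a countable set A. Then X is isomorphic to a subspace of L_p[0,1]: there exist a bounded linear map R : X → L_p([0,1]) and a constant c > 0 with ‖Rx‖_{L_p} ≥ c‖x‖_X for all x ∈ X. -/
open scoped ENNReal
open MeasureTheory Filter

noncomputable section

variable {α : Type*}

/-!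
Independent standard Gaussian variables satisfy `‖∑ aᵢ gᵢ‖_p = (∑ aᵢ²)^{1/2} ‖g‖_p`, so after
rescaling they span an isometric copy of `ℓ₂` in `L_p`. Functions on the disjoint fibres of a
product `I × Ω` turn this into an isometric copy of a countable `ℓ_p`-sum of `ℓ₂`-spaces in
`L_p(I × Ω)`, which sits inside `L_p[0,1]` because Lebesgue measure on `[0,1]` can be mapped onto
any probability measure on a standard Borel space. Sending `x` to the weighted restrictions to all
blocks of all partitions realises the norm `(∑_k ‖x‖_{P_k,W_k}^p)^{1/p}` as the norm of such an
`ℓ_p`-sum, and for finitely many `k` it is equivalent to `sup_k ‖x‖_{P_k,W_k}`.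
-/

open ProbabilityTheory

section LpSequences

variable {ι : Type*} {E : ι → Type*} [∀ i, NormedAddCommGroup (E i)] {p : ℝ≥0∞}

theorem memℓp_iff_tsum_enorm_rpow_lt_top (hp : 0 < p.toReal) {f : ∀ i, E i} :
    Memℓp f p ↔ ∑' i, ‖f i‖ₑ ^ p.toReal < ∞ := by
  have henorm (i : ι) : ‖f i‖ₑ ^ p.toReal = ‖‖f i‖ ^ p.toReal‖ₑ := by
    rw [Real.enorm_rpow_of_nonneg (norm_nonneg _) hp.le, enorm_norm]
  simp only [henorm]
  rw [memℓp_gen_iff hp, lt_top_iff_ne_top, tsum_enorm_ne_top_iff_summable_norm, summable_norm_iff]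

theorem lp_enorm_rpow_eq_tsum_enorm_rpow [Fact (1 ≤ p)] (hp : p ≠ ∞) (f : lp E p) :
    ‖f‖ₑ ^ p.toReal = ∑' i, ‖f i‖ₑ ^ p.toReal := by
  have hp : 0 < p.toReal := ENNReal.toReal_pos (zero_lt_one.trans_le Fact.out).ne' hp
  have hf := lp.hasSum_norm hp f
  simp only [← ofReal_norm, ENNReal.ofReal_rpow_of_nonneg (norm_nonneg _) hp.le]
  rw [← hf.tsum_eq, ENNReal.ofReal_tsum_of_nonneg (fun i => by positivity) hf.summable]

variable [∀ i, NormedSpace ℝ (E i)]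

theorem exists_linearIsometry_lp_of_norm_sum [Fact (1 ≤ p)] (hp : p ≠ ∞) {F : Type*}
    [NormedAddCommGroup F] [NormedSpace ℝ F] [CompleteSpace F] (J : ∀ i, E i →ₗ[ℝ] F)
    (hJ : ∀ (s : Finset ι) (x : ∀ i, E i),
      ‖∑ i ∈ s, J i (x i)‖ ^ p.toReal = ∑ i ∈ s, ‖x i‖ ^ p.toReal) :
    ∃ T : lp E p →ₗᵢ[ℝ] F, ∀ x, HasSum (fun i => J i (x i)) (T x) := by
  classical
  have hp0 : 0 < p.toReal := ENNReal.toReal_pos (zero_lt_one.trans_le Fact.out).ne' hp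
  have hnorm (s : Finset ι) (x : ∀ i, E i) :
      ‖∑ i ∈ s, J i (x i)‖ = ‖∑ i ∈ s, lp.single p i (x i)‖ := by
    rw [← Real.rpow_left_inj (norm_nonneg _) (norm_nonneg _) hp0.ne', hJ,
      lp.norm_sum_single hp0]
  have hsum (x : lp E p) : HasSum (fun i => J i (x i)) (∑' i, J i (x i)) := by
    have hsingle := cauchySeq_finset_iff_vanishing_norm.1 (lp.hasSum_single hp x).cauchySeq
    refine (summable_iff_vanishing_norm.2 fun ε hε => ?_).hasSum
    obtain ⟨s, hs⟩ := hsingle ε hε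
    exact ⟨s, fun t ht => (hnorm t x).trans_lt (hs t ht)⟩
  refine ⟨⟨{ toFun x := ∑' i, J i (x i), map_add' x y := ?_, map_smul' c x := ?_ }, fun x => ?_⟩,
    hsum⟩
  · simpa only [lp.coeFn_add, Pi.add_apply, map_add] using ((hsum x).add (hsum y)).tsum_eq
  · simpa only [lp.coeFn_smul, Pi.smul_apply, map_smul, RingHom.id_apply]
      using ((hsum x).const_smul c).tsum_eq
  · refine tendsto_nhds_unique (hsum x).norm ?_
    simpa only [hnorm] using (lp.hasSum_single hp x).norm

end LpSequences

section Gaussian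

variable {Ω ι : Type*} [MeasurableSpace Ω] {μ : Measure Ω} {X : ι → Ω → ℝ}

theorem hasLaw_finsetSum_gaussianReal {m : ι → ℝ} {v : ι → NNReal} (hindep : iIndepFun X μ)
    (hlaw : ∀ i, HasLaw (X i) (gaussianReal (m i) (v i)) μ) (s : Finset ι) :
    HasLaw (∑ i ∈ s, X i) (gaussianReal (∑ i ∈ s, m i) (∑ i ∈ s, v i)) μ := by
  classical
  have := hindep.isProbabilityMeasure
  refine ⟨Finset.aemeasurable_sum s fun i _ => (hlaw i).aemeasurable, ?_⟩
  induction s using Finset.induction_on with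
  | empty => simp [Pi.zero_def]
  | insert i s hi ih =>
    have hindep' := (hindep.indepFun_finsetSum_of_notMem₀ (fun i => (hlaw i).aemeasurable) hi).symm
    simpa only [Finset.sum_insert hi] using
      gaussianReal_add_gaussianReal_of_indepFun hindep' (hlaw i).map_eq ih

theorem eLpNorm_id_gaussianReal_zero (v : NNReal) (p : ℝ≥0∞) :
    eLpNorm id p (gaussianReal 0 v) = ‖√v‖ₑ * eLpNorm id p (gaussianReal 0 1) := by
  have hscale : gaussianReal 0 v = (gaussianReal 0 1).map (√v * ·) := by
    rw [gaussianReal_map_const_mul, mul_zero, mul_one]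
    congr 1
    ext
    simp
  rw [hscale, eLpNorm_map_measure (by fun_prop) (by fun_prop), ← eLpNorm_const_smul]
  rfl

theorem eLpNorm_sum_mul_gaussian (hindep : iIndepFun X μ)
    (hlaw : ∀ i, HasLaw (X i) (gaussianReal 0 1) μ) (a : ι → ℝ) (s : Finset ι) (p : ℝ≥0∞) :
    eLpNorm (fun ω => ∑ i ∈ s, a i * X i ω) p μ =
      ‖√(∑ i ∈ s, a i ^ 2)‖ₑ * eLpNorm id p (gaussianReal 0 1) := by
  have hmul (i : ι) := gaussianReal_const_mul (hlaw i) (a i)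
  have hindep' : iIndepFun (fun i ω => a i * X i ω) μ :=
    hindep.comp (fun i t => a i * t) fun i => by fun_prop
  have hsum := hasLaw_finsetSum_gaussianReal hindep' hmul s
  have hcomp : (fun ω => ∑ i ∈ s, a i * X i ω) = id ∘ ∑ i ∈ s, fun ω => a i * X i ω := by
    ext
    simp
  rw [hcomp, ← eLpNorm_map_measure (by fun_prop) hsum.aemeasurable, hsum.map_eq]
  simp only [mul_zero, Finset.sum_const_zero, mul_one]
  rw [eLpNorm_id_gaussianReal_zero]
  simp

theorem eLpNorm_id_gaussianReal_ne_zero {m : ℝ} {v : NNReal} (hv : v ≠ 0) {p : ℝ≥0∞}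
    (hp : p ≠ 0) : eLpNorm id p (gaussianReal m v) ≠ 0 := by
  have := nullSingletonClass_gaussianReal (μ := m) hv
  rw [Ne, eLpNorm_eq_zero_iff (by fun_prop) hp]
  intro hzero
  obtain ⟨t, ht, ht'⟩ := (hzero.and (Measure.ae_ne (gaussianReal m v) 0)).exists
  exact ht' ht

theorem memLp_of_hasLaw_gaussianReal {Y : Ω → ℝ} {m : ℝ} {v : NNReal}
    (hlaw : HasLaw Y (gaussianReal m v) μ) {p : ℝ≥0∞} (hp : p ≠ ∞) : MemLp Y p μ := by
  refine (memLp_map_measure_iff (g := id) (by fun_prop) hlaw.aemeasurable).1 ?_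
  rw [hlaw.map_eq]
  exact memLp_id_gaussianReal' p hp

theorem norm_sum_smul_toLp_gaussian (hindep : iIndepFun X μ)
    (hlaw : ∀ i, HasLaw (X i) (gaussianReal 0 1) μ) {p : ℝ≥0∞} (hmem : ∀ i, MemLp (X i) p μ)
    (a : ι → ℝ) (s : Finset ι) :
    ‖∑ i ∈ s, a i • (hmem i).toLp‖ =
      √(∑ i ∈ s, a i ^ 2) * (eLpNorm id p (gaussianReal 0 1)).toReal := by
  have hcoe : ⇑(∑ i ∈ s, a i • (hmem i).toLp) =ᵐ[μ] fun ω => ∑ i ∈ s, a i * X i ω := by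
    grw [Lp.coeFn_fun_finsetSum]
    have hterm : ∀ i ∈ s, ⇑(a i • (hmem i).toLp) =ᵐ[μ] fun ω => a i * X i ω := fun i _ => by
      grw [Lp.coeFn_smul, (hmem i).coeFn_toLp]
      rfl
    filter_upwards [(Finset.eventually_all s).2 hterm] with ω hω
    exact Finset.sum_congr rfl hω
  rw [Lp.norm_def, eLpNorm_congr_ae hcoe, eLpNorm_sum_mul_gaussian hindep hlaw,
    ENNReal.toReal_mul, toReal_enorm, Real.norm_of_nonneg (Real.sqrt_nonneg _)]

theorem exists_linearIsometry_ltwo_Lp_of_gaussian (hindep : iIndepFun X μ)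
    (hlaw : ∀ i, HasLaw (X i) (gaussianReal 0 1) μ) {p : ℝ≥0∞} [Fact (1 ≤ p)] (hp : p ≠ ∞) :
    Nonempty (lp (fun _ : ι => ℝ) 2 →ₗᵢ[ℝ] Lp ℝ p μ) := by
  set K : ℝ := (eLpNorm id p (gaussianReal 0 1)).toReal
  have hK : 0 < K := ENNReal.toReal_pos
    (eLpNorm_id_gaussianReal_ne_zero one_ne_zero (zero_lt_one.trans_le Fact.out).ne')
    (memLp_id_gaussianReal' p hp).eLpNorm_ne_top
  have hmem (i : ι) : MemLp (X i) p μ := memLp_of_hasLaw_gaussianReal (hlaw i) hp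
  let J (i : ι) : ℝ →ₗ[ℝ] Lp ℝ p μ := LinearMap.toSpanSingleton ℝ _ (K⁻¹ • (hmem i).toLp)
  have hJ (s : Finset ι) (a : ι → ℝ) : ‖∑ i ∈ s, J i (a i)‖ = √(∑ i ∈ s, a i ^ 2) := by
    simp only [J, LinearMap.toSpanSingleton_apply, smul_comm _ K⁻¹, ← Finset.smul_sum]
    rw [norm_smul, norm_sum_smul_toLp_gaussian hindep hlaw, Real.norm_of_nonneg (by positivity),
      mul_left_comm, inv_mul_cancel₀ hK.ne', mul_one]
  obtain ⟨T, -⟩ := exists_linearIsometry_lp_of_norm_sum (p := 2) (by simp) J fun s a => by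
    simp [hJ, Real.sq_sqrt (Finset.sum_nonneg fun i _ => sq_nonneg (a i))]
  exact ⟨T⟩

end Gaussian

section Gluing

variable {I Ω : Type*} [MeasurableSpace I] [MeasurableSpace Ω]

/-- The function on `I × Ω` whose restriction to the fibre over `i` is `f i`, rescaled by
`ν {i} ^ (-1/p)` so that the `L^p` norms of the `f i` add up to the `ℓ^p`-sum norm. -/
def glueFibers (p : ℝ≥0∞) (ν : Measure I) (f : I → Ω → ℝ) (z : I × Ω) : ℝ :=
  ν.real {z.1} ^ (-(1 / p.toReal)) * f z.1 z.2

variable {p : ℝ≥0∞} {ν : Measure I} {γ : Measure Ω}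

theorem measurable_glueFibers [Countable I] [DiscreteMeasurableSpace I] {f : I → Ω → ℝ}
    (hf : ∀ i, Measurable (f i)) : Measurable (glueFibers p ν f) :=
  measurable_from_prod_countable_right fun i =>
    ((hf i).const_mul (ν.real {i} ^ (-(1 / p.toReal))) :)

theorem eLpNorm_glueFibers_rpow [Countable I] [DiscreteMeasurableSpace I] [IsFiniteMeasure ν]
    [SFinite γ] (hν : ∀ i, ν {i} ≠ 0) (hp : p ≠ 0) (hp' : p ≠ ∞) {f : I → Ω → ℝ}
    (hf : ∀ i, Measurable (f i)) :
    eLpNorm (glueFibers p ν f) p (ν.prod γ) ^ p.toReal = ∑' i, eLpNorm (f i) p γ ^ p.toReal := by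
  lift p to NNReal using hp'
  rw [ENNReal.coe_ne_zero] at hp
  have hp0 : (0 : ℝ) < p := NNReal.coe_pos.2 hp.bot_lt
  simp only [ENNReal.coe_toReal]
  have hscale (i : I) : ‖ν.real {i} ^ (-(1 / p : ℝ))‖ₑ ^ (p : ℝ) * ν {i} = 1 := by
    have hpos : 0 < ν.real {i} := ENNReal.toReal_pos (hν i) (measure_ne_top _ _)
    rw [← Real.enorm_rpow_of_nonneg (by positivity) hp0.le, ← Real.rpow_mul hpos.le,
      neg_mul, one_div_mul_cancel hp0.ne', Real.rpow_neg_one, Real.enorm_of_nonneg (by positivity),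
      ENNReal.ofReal_inv_of_pos hpos, ofReal_measureReal,
      ENNReal.inv_mul_cancel (hν i) (measure_ne_top _ _)]
  have hmeas := (measurable_glueFibers (p := p) (ν := ν) hf).enorm.pow_const (p : ℝ)
  rw [eLpNorm_nnreal_pow_eq_lintegral hp, lintegral_prod _ hmeas.aemeasurable, lintegral_countable']
  refine tsum_congr fun i => ?_
  simp only [glueFibers, ENNReal.coe_toReal, enorm_mul, ENNReal.mul_rpow_of_nonneg _ _ hp0.le]
  rw [lintegral_const_mul _ ((hf i).enorm.pow_const _), mul_right_comm, hscale, one_mul,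
    eLpNorm_nnreal_pow_eq_lintegral hp]

theorem ae_prod_of_forall_ae [Countable I] {q : I × Ω → Prop}
    (h : ∀ i, ∀ᵐ ω ∂γ, q (i, ω)) : ∀ᵐ z ∂ν.prod γ, q z := by
  filter_upwards [Measure.quasiMeasurePreserving_snd.ae (ae_all_iff.2 h)] with z hz using hz z.1

theorem exists_linearIsometry_lp_Lp_prod [Countable I] [DiscreteMeasurableSpace I]
    [IsFiniteMeasure ν] [SFinite γ] (hν : ∀ i, ν {i} ≠ 0) [Fact (1 ≤ p)] (hp : p ≠ ∞)
    {E : I → Type*} [∀ i, NormedAddCommGroup (E i)] [∀ i, NormedSpace ℝ (E i)]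
    (T : ∀ i, E i →ₗᵢ[ℝ] Lp ℝ p γ) :
    Nonempty (lp E p →ₗᵢ[ℝ] Lp ℝ p (ν.prod γ)) := by
  have hp1 : p ≠ 0 := (zero_lt_one.trans_le Fact.out).ne'
  let G (x : lp E p) : I × Ω → ℝ := glueFibers p ν fun i => T i (x i)
  have hmeas (x : lp E p) (i : I) : Measurable (T i (x i)) := (Lp.stronglyMeasurable _).measurable
  have hnorm (x : lp E p) : eLpNorm (G x) p (ν.prod γ) = ‖x‖ₑ := by
    refine ENNReal.rpow_left_injective (ENNReal.toReal_pos hp1 hp).ne' ?_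
    dsimp only
    rw [eLpNorm_glueFibers_rpow hν hp1 hp (hmeas x), lp_enorm_rpow_eq_tsum_enorm_rpow hp]
    simp only [← Lp.enorm_def, LinearIsometry.enorm_map]
  have hG (x : lp E p) : MemLp (G x) p (ν.prod γ) :=
    ⟨(measurable_glueFibers (hmeas x)).aestronglyMeasurable, by simp [hnorm]⟩
  let S : lp E p →ₗ[ℝ] Lp ℝ p (ν.prod γ) :=
    { toFun x := (hG x).toLp
      map_add' x y := by
        rw [← MemLp.toLp_add, MemLp.toLp_eq_toLp_iff]
        refine ae_prod_of_forall_ae fun i => ?_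
        filter_upwards [Lp.coeFn_add (T i (x i)) (T i (y i))] with ω hω
        simp only [G, glueFibers, lp.coeFn_add, Pi.add_apply, map_add, hω, mul_add]
      map_smul' c x := by
        rw [RingHom.id_apply, ← MemLp.toLp_const_smul, MemLp.toLp_eq_toLp_iff]
        refine ae_prod_of_forall_ae fun i => ?_
        filter_upwards [Lp.coeFn_smul c (T i (x i))] with ω hω
        simp only [G, glueFibers, lp.coeFn_smul, Pi.smul_apply, map_smul, hω, smul_eq_mul,
          mul_left_comm] }
  exact ⟨⟨S, fun x => (Lp.norm_toLp _ (hG x)).trans (by rw [hnorm, toReal_enorm])⟩⟩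

end Gluing

section UnitInterval

/-- `E` embeds linearly and isometrically into `L_p[0,1]`. -/
def EmbedsInUnitIntervalLp (p : ℝ≥0∞) [Fact (1 ≤ p)] (E : Type*) [NormedAddCommGroup E]
    [NormedSpace ℝ E] : Prop :=
  Nonempty (E →ₗᵢ[ℝ] Lp ℝ p (volume : Measure (Set.Icc (0 : ℝ) 1)))

variable {p : ℝ≥0∞} [Fact (1 ≤ p)]

theorem EmbedsInUnitIntervalLp.of_linearIsometry_Lp {E Ω : Type*} [NormedAddCommGroup E]
    [NormedSpace ℝ E] [MeasurableSpace Ω] [StandardBorelSpace Ω] {γ : Measure Ω}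
    [IsProbabilityMeasure γ] (T : E →ₗᵢ[ℝ] Lp ℝ p γ) : EmbedsInUnitIntervalLp p E := by
  have : Nonempty Ω := γ.nonempty_of_neZero
  obtain ⟨φ, hφ, hmap⟩ := γ.exists_measurable_map_eq
  exact ⟨(Lp.compMeasurePreservingₗᵢ ℝ φ ⟨hφ, hmap⟩).comp T⟩

theorem embedsInUnitIntervalLp_ltwo (ι : Type*) [Countable ι] (hp : p ≠ ∞) :
    EmbedsInUnitIntervalLp p (lp (fun _ : ι => ℝ) 2) := by
  let γ : Measure (ι → ℝ) := Measure.infinitePi fun _ => gaussianReal 0 1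
  have hindep : iIndepFun (fun i (ω : ι → ℝ) => ω i) γ :=
    iIndepFun_infinitePi (X := fun _ t => t) fun _ => measurable_id
  have hlaw (i : ι) : HasLaw (fun ω : ι → ℝ => ω i) (gaussianReal 0 1) γ :=
    (measurePreserving_eval_infinitePi (fun _ => gaussianReal 0 1) i).hasLaw
  obtain ⟨T⟩ := exists_linearIsometry_ltwo_Lp_of_gaussian hindep hlaw hp
  exact .of_linearIsometry_Lp T

theorem EmbedsInUnitIntervalLp.lp {I : Type*} [Countable I] {E : I → Type*}
    [∀ i, NormedAddCommGroup (E i)] [∀ i, NormedSpace ℝ (E i)] (hp : p ≠ ∞)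
    (hE : ∀ i, EmbedsInUnitIntervalLp p (E i)) : EmbedsInUnitIntervalLp p (lp E p) := by
  cases isEmpty_or_nonempty I with
  | inl _ => exact ⟨⟨0, fun x => by simp [Subsingleton.elim x 0]⟩⟩
  | inr _ =>
    let _ : MeasurableSpace I := ⊤
    have : DiscreteMeasurableSpace I := ⟨fun _ => trivial⟩
    have : NeZero (Measure.count : Measure I) := ⟨Measure.count_ne_zero''⟩
    let ν : Measure I := Measure.count.toFinite
    have hν (i : I) : ν {i} ≠ 0 := by simp [ν, toFinite_apply_eq_zero_iff]
    obtain ⟨S⟩ := exists_linearIsometry_lp_Lp_prod hν hp fun i => (hE i).some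
    exact .of_linearIsometry_Lp S

end UnitInterval

section PartitionsAndWeights

variable {A : Type*} {p : ℝ} {𝒞 : Set (PWPair A)}

theorem IsPartition.countable [Countable A] {P : Set (Set A)} (hP : IsPartition P) :
    P.Countable := by
  choose e he using fun N : P => hP.1 N.1 N.2
  refine Function.Injective.countable (f := e) fun M N hMN => Subtype.ext ?_
  exact hP.2.1.elim_set M.2 N.2 (e M) (he M) (hMN ▸ he N)

theorem pwNorm_le_famNorm (p : ℝ) {PW : PWPair A} (h : PW ∈ 𝒞) (x : A → ℝ) :
    pwNorm p PW.1 PW.2 x ≤ famNorm p 𝒞 x :=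
  le_iSup₂ (f := fun (PW : PWPair A) (_ : PW ∈ 𝒞) => pwNorm p PW.1 PW.2 x) PW h

theorem famNorm_rpow_le_tsum_pwNorm_rpow (hp : 0 < p) (x : A → ℝ) :
    famNorm p 𝒞 x ^ p ≤ ∑' PW : 𝒞, pwNorm p PW.1.1 PW.1.2 x ^ p := by
  rw [← ENNReal.le_rpow_inv_iff hp]
  refine iSup₂_le fun PW hPW => ?_
  rw [ENNReal.le_rpow_inv_iff hp]
  exact ENNReal.le_tsum (f := fun PW : 𝒞 => pwNorm p PW.1.1 PW.1.2 x ^ p) ⟨PW, hPW⟩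

theorem tsum_pwNorm_rpow_le_card_mul_famNorm_rpow (hp : 0 ≤ p) (x : A → ℝ) :
    ∑' PW : 𝒞, pwNorm p PW.1.1 PW.1.2 x ^ p ≤ ENat.card 𝒞 * famNorm p 𝒞 x ^ p := by
  rw [← ENNReal.tsum_const]
  exact ENNReal.tsum_le_tsum fun PW => ENNReal.rpow_le_rpow (pwNorm_le_famNorm p PW.2 x) hp

/-- The `ℓ_p`-sum of the Hilbert spaces `ℓ₂(N)` over all blocks `N` of all partitions in `𝒞`. -/
abbrev BlockSum (p : ℝ) (𝒞 : Set (PWPair A)) :=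
  lp (fun i : Σ PW : 𝒞, PW.1.1 => lp (fun _ : i.2.1 => ℝ) 2) (ENNReal.ofReal p)

/-- The weighted coordinates `x_j w_j` of `x`, listed block by block. -/
def weightedBlocks (𝒞 : Set (PWPair A)) :
    (A → ℝ) →ₗ[ℝ] ∀ i : Σ PW : 𝒞, PW.1.1, i.2.1 → ℝ where
  toFun x i j := x j * i.1.1.2 j
  map_add' x y := by
    ext
    exact add_mul ..
  map_smul' c x := by
    ext
    exact mul_assoc ..

theorem tsum_pwNorm_rpow_eq_tsum_weightedBlocks (hp : p ≠ 0) (x : A → ℝ) :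
    ∑' PW : 𝒞, pwNorm p PW.1.1 PW.1.2 x ^ p =
      ∑' i : Σ PW : 𝒞, PW.1.1,
        (∑' j, ‖weightedBlocks 𝒞 x i j‖ₑ ^ (2 : ℝ≥0∞).toReal) ^ (p / 2) := by
  have hsq (i : Σ PW : 𝒞, PW.1.1) (j : i.2.1) :
      ‖weightedBlocks 𝒞 x i j‖ₑ ^ (2 : ℝ≥0∞).toReal =
        ENNReal.ofReal (x j ^ 2 * i.1.1.2 j ^ 2) := by
    rw [← mul_pow, ENNReal.toReal_ofNat, ENNReal.rpow_ofNat, ← enorm_pow,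
      Real.enorm_of_nonneg (sq_nonneg _)]
    rfl
  simp only [hsq]
  rw [ENNReal.tsum_sigma']
  refine tsum_congr fun PW => ?_
  rw [pwNorm, ← ENNReal.rpow_mul, one_div_mul_cancel hp, ENNReal.rpow_one]

theorem exists_blockSum_eq_weightedBlocks [Fact (1 ≤ ENNReal.ofReal p)] {x : A → ℝ}
    (hx : ∑' PW : 𝒞, pwNorm p PW.1.1 PW.1.2 x ^ p < ∞) :
    ∃ y : BlockSum p 𝒞, (∀ i, ⇑(y i) = weightedBlocks 𝒞 x i) ∧
      ‖y‖ₑ ^ p = ∑' PW : 𝒞, pwNorm p PW.1.1 PW.1.2 x ^ p := by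
  have hp := ENNReal.ofReal_pos.1 (zero_lt_one.trans_le (Fact.out : 1 ≤ ENNReal.ofReal p))
  have hp' : (ENNReal.ofReal p).toReal = p := ENNReal.toReal_ofReal hp.le
  rw [tsum_pwNorm_rpow_eq_tsum_weightedBlocks hp.ne'] at hx ⊢
  have hblock (i : Σ PW : 𝒞, PW.1.1) : Memℓp (weightedBlocks 𝒞 x i) 2 :=
    (memℓp_iff_tsum_enorm_rpow_lt_top (by simp)).2 <|
      (ENNReal.rpow_lt_top_iff_of_pos (by positivity)).1 ((ENNReal.le_tsum i).trans_lt hx)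
  let v (i : Σ PW : 𝒞, PW.1.1) : lp (fun _ : i.2.1 => ℝ) 2 := ⟨_, hblock i⟩
  have hv (i : Σ PW : 𝒞, PW.1.1) : ‖v i‖ₑ ^ (ENNReal.ofReal p).toReal =
      (∑' j, ‖weightedBlocks 𝒞 x i j‖ₑ ^ (2 : ℝ≥0∞).toReal) ^ (p / 2) := by
    rw [← lp_enorm_rpow_eq_tsum_enorm_rpow (by simp) (v i), ← ENNReal.rpow_mul, hp',
      ENNReal.toReal_ofNat, mul_div_cancel₀ p two_ne_zero]
  simp only [← hv] at hx ⊢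
  let y : BlockSum p 𝒞 := ⟨v, (memℓp_iff_tsum_enorm_rpow_lt_top (by rwa [hp'])).2 hx⟩
  have hy := lp_enorm_rpow_eq_tsum_enorm_rpow ENNReal.ofReal_ne_top y
  rw [hp'] at hy ⊢
  exact ⟨y, fun i => rfl, hy⟩

theorem exists_linearMap_eq_of_eq_weightedBlocks {F : Type*}
    [AddCommGroup F] [Module ℝ F] (T : BlockSum p 𝒞 →ₗ[ℝ] F) :
    ∃ R : (A → ℝ) →ₗ[ℝ] F, ∀ (x : A → ℝ) (y : BlockSum p 𝒞),
      (∀ i, ⇑(y i) = weightedBlocks 𝒞 x i) → R x = T y := by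
  let coords : BlockSum p 𝒞 →ₗ[ℝ] ∀ i : Σ PW : 𝒞, PW.1.1, i.2.1 → ℝ :=
    { toFun y i := y i
      map_add' _ _ := rfl
      map_smul' _ _ := rfl }
  have hinj : Function.Injective coords := fun y z hyz =>
    lp.ext (funext fun i => lp.ext (congrFun hyz i))
  -- A left inverse of `coords` extends `T`, seen as a map on coordinates, to all of `A → ℝ`.
  obtain ⟨g, hg⟩ := coords.exists_leftInverse_of_injective (LinearMap.ker_eq_bot.2 hinj)
  refine ⟨T ∘ₗ g ∘ₗ weightedBlocks 𝒞, fun x y hy => ?_⟩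
  have hxy : weightedBlocks 𝒞 x = coords y := funext fun i => (hy i).symm
  rw [LinearMap.comp_apply, LinearMap.comp_apply, hxy, ← LinearMap.comp_apply g, hg,
    LinearMap.id_apply]

theorem embedsInUnitIntervalLp_blockSum [Countable A] [Fact (1 ≤ ENNReal.ofReal p)]
    (h𝒞 : 𝒞.Countable) (hP : ∀ PW ∈ 𝒞, PW.1.Countable) :
    EmbedsInUnitIntervalLp (ENNReal.ofReal p) (BlockSum p 𝒞) := by
  have := h𝒞.to_subtype
  have (PW : 𝒞) : Countable PW.1.1 := hP PW PW.2
  exact .lp ENNReal.ofReal_ne_top fun i =>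
    embedsInUnitIntervalLp_ltwo i.2.1 ENNReal.ofReal_ne_top

theorem exists_linearMap_enorm_rpow_eq_tsum_pwNorm_rpow [Countable A]
    [Fact (1 ≤ ENNReal.ofReal p)] (h𝒞 : 𝒞.Countable) (hP : ∀ PW ∈ 𝒞, PW.1.Countable) :
    ∃ R : (A → ℝ) →ₗ[ℝ] Lp ℝ (ENNReal.ofReal p) (volume : Measure (Set.Icc (0 : ℝ) 1)),
      ∀ x, ∑' PW : 𝒞, pwNorm p PW.1.1 PW.1.2 x ^ p < ∞ →
        ‖R x‖ₑ ^ p = ∑' PW : 𝒞, pwNorm p PW.1.1 PW.1.2 x ^ p := by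
  obtain ⟨T⟩ := embedsInUnitIntervalLp_blockSum (p := p) h𝒞 hP
  obtain ⟨R, hR⟩ := exists_linearMap_eq_of_eq_weightedBlocks T.toLinearMap
  refine ⟨R, fun x hx => ?_⟩
  obtain ⟨y, hxy, hy⟩ := exists_blockSum_eq_weightedBlocks hx
  rw [hR x y hxy, LinearIsometry.coe_toLinearMap, T.enorm_map, hy]

end PartitionsAndWeights

theorem statement4_general {A : Type*} [Countable A] (p : ℝ) [Fact (1 ≤ ENNReal.ofReal p)]
    (𝒞 : Set (PWPair A)) (h𝒞 : ∀ PW ∈ 𝒞, PW.1.Countable) (hfin : 𝒞.Finite) :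
    ∃ (R : (A → ℝ) →ₗ[ℝ] Lp ℝ (ENNReal.ofReal p) (volume : Measure (Set.Icc (0 : ℝ) 1)))
      (C : NNReal), ∀ x, famNorm p 𝒞 x < ⊤ →
        famNorm p 𝒞 x ≤ ‖R x‖ₑ ∧ ‖R x‖ₑ ≤ C * famNorm p 𝒞 x := by
  have hp := ENNReal.ofReal_pos.1 (zero_lt_one.trans_le (Fact.out : 1 ≤ ENNReal.ofReal p))
  have := hfin.to_subtype
  obtain ⟨R, hR⟩ := exists_linearMap_enorm_rpow_eq_tsum_pwNorm_rpow (p := p) hfin.countable h𝒞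
  refine ⟨R, (Nat.card 𝒞 : NNReal) ^ (1 / p), fun x hx => ?_⟩
  have hupper := tsum_pwNorm_rpow_le_card_mul_famNorm_rpow (𝒞 := 𝒞) hp.le x
  rw [ENat.card_eq_coe_natCard, ENat.toENNReal_coe] at hupper
  have hRx := hR x <| hupper.trans_lt <|
    ENNReal.mul_lt_top (ENNReal.natCast_lt_top _) (ENNReal.rpow_lt_top_of_nonneg hp.le hx.ne)
  constructor <;> rw [← ENNReal.rpow_le_rpow_iff hp, hRx]
  · exact famNorm_rpow_le_tsum_pwNorm_rpow hp x
  · rwa [ENNReal.mul_rpow_of_nonneg _ _ hp.le, ENNReal.coe_rpow_of_nonneg _ (by positivity),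
      ← ENNReal.rpow_mul, one_div_mul_cancel hp.ne', ENNReal.rpow_one, ENNReal.coe_natCast]

/-- For `p > 2`, a space `X(𝒞)` whose norm is given by finitely many
partitions and weights is isomorphic to a subspace of `L_p[0,1]`: there is a map `R`
into `L_p([0,1])`, additive and homogeneous on `X(𝒞)`, bounded above, and bounded
below by some `c > 0`. -/
theorem statement4 {A : Type*} [Countable A] (p : ℝ) (hp : 2 < p)
    [Fact (1 ≤ ENNReal.ofReal p)]
    (𝒞 : Set (PWPair A)) (h𝒞 : IsPWFamily 𝒞) (hfin : 𝒞.Finite) :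
    ∃ (R : (A → ℝ) → MeasureTheory.Lp ℝ (ENNReal.ofReal p)
        (volume : Measure ↥(Set.Icc (0 : ℝ) 1))) (c C : ℝ), 0 < c ∧
      (∀ x y, famNorm p 𝒞 x < ⊤ → famNorm p 𝒞 y < ⊤ → R (x + y) = R x + R y) ∧
      (∀ (r : ℝ) (x), famNorm p 𝒞 x < ⊤ → R (r • x) = r • R x) ∧
      (∀ x, famNorm p 𝒞 x < ⊤ →
        ENNReal.ofReal ‖R x‖ ≤ ENNReal.ofReal C * famNorm p 𝒞 x ∧
        ENNReal.ofReal c * famNorm p 𝒞 x ≤ ENNReal.ofReal ‖R x‖) := by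
  obtain ⟨R, C, hR⟩ := statement4_general p 𝒞 (fun PW hPW => (h𝒞 PW hPW).1.countable) hfin
  exact ⟨R, 1, C, one_pos, fun x y _ _ => map_add R x y, fun r x _ => map_smul R r x,
    fun x hx => by simpa [and_comm] using hR x hx⟩
end
end

section
/- Let p > 2 and let X = X(𝒫), Y = X(𝒬) where 𝒫 = {(P_i,(w^i_a)) : 1 ≤ i ≤ M} and 𝒬 = {(Q_j,(v^j_b)) : 1 ≤ j ≤ N} are finite families of partition–weight pairs on countable sets A and B, with natural coordinate bases (x_a)_{a∈A} and (y_b)_{b∈B}, and let S : X → L_p([0,1]) and T : Y → L_p([0,1]) be bounded linear maps that are bounded below. Then the L_p tensor product of X and Y has a norm given by finitely many partitions and weights: there exist constants c, C > 0 such that for all scalars (c_{a,b}) with only finitely many nonzero, c·M(c_{a,b}) ≤ ‖Σ_{a,b} c_{a,b} (Sx_a ⊗ Ty_b)‖_{L_p([0,1]²)} ≤ C·M(c_{a,b}), where M(c_{a,b}) = max_{1≤i≤M, 1≤j≤N} (Σ_{p₀∈P_i, q₀∈Q_j} (Σ_{a∈p₀, b∈q₀} c_{a,b}² (w^i_a)²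 (v^j_b)²)^{p/2})^{1/p}. -/
open scoped ENNReal
open MeasureTheory Filter

noncomputable section

variable {α : Type*}

/-- The coordinate basis vector `e_a` of a sequence space on `α`. -/
def coordVec (a : α) : α → ℝ := Set.indicator {a} 1

/-!
If `g` is a standard Gaussian vector in a Euclidean space `E`, the `p`-th moment of `⟪y, g⟫` is
exactly `‖y‖ ^ p` times the `p`-th moment of a standard Gaussian variable. Averaging over `g`
therefore extends the equivalence between the `L_p`-norm and the mixed `ℓ_p(ℓ_2)`-norm from scalar
coefficients to coefficients in `E`. Jensen's inequality, applied to the `ℓ_2`-sums weighted by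
`‖y b‖ ^ 2` and to the Gaussian average, makes the averaged mixed norm comparable to the mixed norm
of the vectors. For the tensor product, Fubini reduces the inner integral to scalar coefficients
in one factor, and the outer integral to Euclidean coefficients in the other. The number of
partitions enters only because the maximum of finitely many norms is comparable to their
`ℓ_p`-sum.
-/

open scoped NNReal RealInnerProductSpace
open ProbabilityTheory

/-- `x` and `y` agree up to the factor `C`, in both directions. -/
def ComparableWith (C : ℝ≥0) (x y : ℝ≥0∞) : Prop := x ≤ C * y ∧ y ≤ C * x

namespace ComparableWith

variable {C D : ℝ≥0} {x y z : ℝ≥0∞}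

lemma symm (h : ComparableWith C x y) : ComparableWith C y x := ⟨h.2, h.1⟩

lemma trans (hxy : ComparableWith C x y) (hyz : ComparableWith D y z) :
    ComparableWith (C * D) x z := by
  constructor
  · grw [hxy.1, hyz.1, ENNReal.coe_mul, mul_assoc]
  · grw [hyz.2, hxy.2, ENNReal.coe_mul, ← mul_assoc, mul_comm (C : ℝ≥0∞)]

lemma of_le (hxy : x ≤ C * y) (hyx : y ≤ D * x) : ComparableWith (max C D) x y := by
  constructor
  · grw [hxy, le_max_left C D]
  · grw [hyx, le_max_right C D]

lemma rpow (h : ComparableWith C x y) {r : ℝ} (hr : 0 ≤ r) :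
    ComparableWith (C ^ r) (x ^ r) (y ^ r) := by
  simp only [ComparableWith, ENNReal.coe_rpow_of_nonneg _ hr, ← ENNReal.mul_rpow_of_nonneg _ _ hr]
  exact ⟨ENNReal.rpow_le_rpow h.1 hr, ENNReal.rpow_le_rpow h.2 hr⟩

lemma const_mul (h : ComparableWith C x y) (a : ℝ≥0∞) : ComparableWith C (a * x) (a * y) := by
  simp only [ComparableWith, mul_left_comm _ a]
  exact ⟨mul_le_mul_right h.1 a, mul_le_mul_right h.2 a⟩

lemma tsum {ι : Type*} {f g : ι → ℝ≥0∞} (h : ∀ i, ComparableWith C (f i) (g i)) :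
    ComparableWith C (∑' i, f i) (∑' i, g i) := by
  simp only [ComparableWith, ← ENNReal.tsum_mul_left]
  exact ⟨ENNReal.tsum_le_tsum fun i => (h i).1, ENNReal.tsum_le_tsum fun i => (h i).2⟩

lemma lintegral {Ω : Type*} [MeasurableSpace Ω] {μ : Measure Ω} {f g : Ω → ℝ≥0∞}
    (h : ∀ t, ComparableWith C (f t) (g t)) :
    ComparableWith C (∫⁻ t, f t ∂μ) (∫⁻ t, g t ∂μ) := by
  simp only [ComparableWith, ← lintegral_const_mul' _ _ ENNReal.coe_ne_top]
  exact ⟨lintegral_mono fun t => (h t).1, lintegral_mono fun t => (h t).2⟩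

lemma ofReal_inv_mul_le (h : ComparableWith C x y) : ENNReal.ofReal (C + 1)⁻¹ * y ≤ x := by
  rw [ENNReal.ofReal_inv_of_pos (by positivity), ← ENNReal.div_eq_inv_mul]
  refine ENNReal.div_le_of_le_mul' (h.2.trans ?_)
  rw [ENNReal.ofReal_add C.coe_nonneg zero_le_one, ENNReal.ofReal_coe_nnreal]
  gcongr
  exact le_self_add

lemma le_ofReal_mul (h : ComparableWith C x y) : x ≤ ENNReal.ofReal (C + 1) * y := by
  refine h.1.trans ?_
  rw [ENNReal.ofReal_add C.coe_nonneg zero_le_one, ENNReal.ofReal_coe_nnreal]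
  gcongr
  exact le_self_add

end ComparableWith

lemma sq_rpow_half (x : ℝ≥0∞) (p : ℝ) : (x ^ 2) ^ (p / 2) = x ^ p := by
  rw [← ENNReal.rpow_natCast, ← ENNReal.rpow_mul, Nat.cast_ofNat, mul_div_cancel₀ p two_ne_zero]

section Jensen

variable {Ω β : Type*} [MeasurableSpace Ω] {μ : Measure Ω} {G : Finset β} {γ : ℝ≥0} {q : ℝ}

lemma sum_mul_rpow_le_rpow_sum_mul {w : β → ℝ≥0∞}
    (hw : ∑ b ∈ G, w b = 1) (f : β → ℝ≥0∞) (hq0 : 0 < q) (hq1 : q ≤ 1) :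
    ∑ b ∈ G, w b * f b ^ q ≤ (∑ b ∈ G, w b * f b) ^ q := by
  rw [← ENNReal.rpow_inv_le_iff hq0]
  simpa only [ENNReal.rpow_rpow_inv hq0.ne'] using
    ENNReal.rpow_arith_mean_le_arith_mean_rpow G w (fun b => f b ^ q) hw
      ((one_le_inv₀ hq0).2 hq1)

lemma lintegral_sum_mul_eq_of_sum_eq_one {c : ℝ≥0∞} {w : β → ℝ≥0∞} {f : β → Ω → ℝ≥0∞}
    (hw : ∑ b ∈ G, w b = 1) (hf : ∀ b, Measurable (f b))
    (hc : ∀ b, w b ≠ 0 → ∫⁻ t, f b t ∂μ = c) : ∫⁻ t, ∑ b ∈ G, w b * f b t ∂μ = c := by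
  rw [lintegral_finsetSum _ fun b _ => (hf b).const_mul _, ← one_mul c, ← hw, Finset.sum_mul]
  refine Finset.sum_congr rfl fun b _ => ?_
  rw [lintegral_const_mul _ (hf b)]
  obtain hb | hb := eq_or_ne (w b) 0
  · rw [hb, zero_mul, zero_mul]
  · rw [hc b hb]

variable [IsProbabilityMeasure μ]

lemma rpow_lintegral_le_lintegral_rpow {f : Ω → ℝ≥0∞} (hf : Measurable f) (hq : 1 ≤ q) :
    (∫⁻ t, f t ∂μ) ^ q ≤ ∫⁻ t, f t ^ q ∂μ := by
  have h := eLpNorm'_le_eLpNorm'_of_exponent_le one_pos hq μ hf.aestronglyMeasurable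
  simp only [eLpNorm'_eq_lintegral_enorm, enorm_eq_self, ENNReal.rpow_one, div_one, one_div] at h
  rwa [ENNReal.le_rpow_inv_iff (one_pos.trans_le hq)] at h

lemma lintegral_rpow_le_rpow_lintegral {f : Ω → ℝ≥0∞} (hf : Measurable f) (hq0 : 0 < q)
    (hq1 : q ≤ 1) : ∫⁻ t, f t ^ q ∂μ ≤ (∫⁻ t, f t ∂μ) ^ q := by
  rw [← ENNReal.rpow_inv_le_iff hq0]
  simpa only [ENNReal.rpow_rpow_inv hq0.ne'] using
    rpow_lintegral_le_lintegral_rpow (μ := μ) (hf.pow_const q) ((one_le_inv₀ hq0).2 hq1)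

lemma lintegral_rpow_sum_mul_comparableWith_one {w : β → ℝ≥0∞} {f : β → Ω → ℝ≥0∞} (hq : 0 < q)
    (hγ : γ ≠ 0) (hw : ∑ b ∈ G, w b = 1) (hf : ∀ b, Measurable (f b))
    (hmean : ∀ b, w b ≠ 0 → ∫⁻ t, f b t ∂μ = 1)
    (hmoment : ∀ b, w b ≠ 0 → ∫⁻ t, f b t ^ q ∂μ = γ) :
    ComparableWith (max γ γ⁻¹) (∫⁻ t, (∑ b ∈ G, w b * f b t) ^ q ∂μ) 1 := by
  have hF : Measurable fun t => ∑ b ∈ G, w b * f b t := by fun_prop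
  have hmean_sum := lintegral_sum_mul_eq_of_sum_eq_one hw hf hmean
  have hmoment_sum := lintegral_sum_mul_eq_of_sum_eq_one hw (fun b => (hf b).pow_const q) hmoment
  have hγ_inv : (γ⁻¹ : ℝ≥0) * (γ : ℝ≥0∞) = 1 := by exact_mod_cast inv_mul_cancel₀ hγ
  have hone : (1 : ℝ≥0∞) ≤ (max γ γ⁻¹ : ℝ≥0) := by
    exact_mod_cast (le_total 1 γ).elim le_max_of_le_left fun h =>
      le_max_of_le_right ((one_le_inv₀ (pos_iff_ne_zero.2 hγ)).2 h)
  obtain hq1 | hq1 := le_total 1 q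
  · have hlower : 1 ≤ ∫⁻ t, (∑ b ∈ G, w b * f b t) ^ q ∂μ := by
      simpa only [hmean_sum, ENNReal.one_rpow] using
        rpow_lintegral_le_lintegral_rpow (μ := μ) hF hq1
    have hupper : ∫⁻ t, (∑ b ∈ G, w b * f b t) ^ q ∂μ ≤ γ := hmoment_sum ▸
      lintegral_mono fun t => ENNReal.rpow_arith_mean_le_arith_mean_rpow G w (f · t) hw hq1
    exact ⟨by grw [hupper, mul_one, ← le_max_left], by grw [← hlower, ← hone, one_mul]⟩
  · have hupper : ∫⁻ t, (∑ b ∈ G, w b * f b t) ^ q ∂μ ≤ 1 := by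
      simpa only [hmean_sum, ENNReal.one_rpow] using
        lintegral_rpow_le_rpow_lintegral (μ := μ) hF hq hq1
    have hlower : (γ : ℝ≥0∞) ≤ ∫⁻ t, (∑ b ∈ G, w b * f b t) ^ q ∂μ := hmoment_sum ▸
      lintegral_mono fun t => sum_mul_rpow_le_rpow_sum_mul hw (f · t) hq hq1
    exact ⟨by grw [hupper, ← hone, one_mul],
      by grw [← le_max_right γ γ⁻¹, ← hlower, hγ_inv]⟩

lemma lintegral_rpow_sum_mul_comparableWith {s : β → ℝ≥0∞} {f : β → Ω → ℝ≥0∞} (hq : 0 < q)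
    (hγ : γ ≠ 0) (hs : ∀ b, s b ≠ ⊤) (hf : ∀ b, Measurable (f b))
    (hmean : ∀ b, s b ≠ 0 → ∫⁻ t, f b t ∂μ = 1)
    (hmoment : ∀ b, s b ≠ 0 → ∫⁻ t, f b t ^ q ∂μ = γ) :
    ComparableWith (max γ γ⁻¹) (∫⁻ t, (∑ b ∈ G, s b * f b t) ^ q ∂μ) ((∑ b ∈ G, s b) ^ q) := by
  set σ := ∑ b ∈ G, s b with hσ
  obtain hσ0 | hσ0 := eq_or_ne σ 0
  · have hs0 : ∀ t, ∑ b ∈ G, s b * f b t = 0 := fun t => Finset.sum_eq_zero fun b hb => by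
      rw [Finset.sum_eq_zero_iff.1 hσ0 b hb, zero_mul]
    simp [ComparableWith, hs0, hσ0, hq]
  have hσ_top : σ ≠ ⊤ := ENNReal.sum_ne_top.2 fun b _ => hs b
  have hw : ∑ b ∈ G, s b / σ = 1 := by
    simp only [div_eq_mul_inv, ← Finset.sum_mul, ← hσ, ENNReal.mul_inv_cancel hσ0 hσ_top]
  have hs_of_ne {b : β} (hb : s b / σ ≠ 0) : s b ≠ 0 := fun h => hb (by simp [h])
  have hscale : ∀ t, (∑ b ∈ G, s b * f b t) ^ q = σ ^ q * (∑ b ∈ G, s b / σ * f b t) ^ q := by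
    intro t
    rw [← ENNReal.mul_rpow_of_nonneg _ _ hq.le, Finset.mul_sum]
    simp only [← mul_assoc, ENNReal.mul_div_cancel hσ0 hσ_top]
  have hσq_top : σ ^ q ≠ ⊤ := ENNReal.rpow_ne_top_of_nonneg hq.le hσ_top
  simp only [hscale, lintegral_const_mul' _ _ hσq_top]
  simpa only [mul_one] using (lintegral_rpow_sum_mul_comparableWith_one hq hγ hw hf
    (fun b hb => hmean b (hs_of_ne hb)) fun b hb => hmoment b (hs_of_ne hb)).const_mul (σ ^ q)

end Jensen

section Gaussian

/-- The `p`-th absolute moment of a standard real Gaussian variable. -/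
def gaussianMoment (p : ℝ) : ℝ≥0∞ := ∫⁻ x, ‖x‖ₑ ^ p ∂gaussianReal 0 1

/-- The constant in the comparison between Gaussian averages and square functions. -/
def gaussianConst (p : ℝ) : ℝ≥0 := max (gaussianMoment p).toNNReal (gaussianMoment p).toNNReal⁻¹

variable {p : ℝ}

lemma gaussianMoment_ne_zero (p : ℝ) : gaussianMoment p ≠ 0 := by
  have := nullSingletonClass_gaussianReal (μ := 0) (v := 1) one_ne_zero
  rw [gaussianMoment, ← pos_iff_ne_zero, lintegral_pos_iff_support (by fun_prop)]
  refine (measure_mono (μ := gaussianReal 0 1) (s := {0}ᶜ) fun x hx => ?_).trans_lt' ?_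
  · simp [Function.mem_support, ENNReal.rpow_eq_zero_iff, show x ≠ 0 from hx]
  · simp [prob_compl_eq_one_sub]

lemma gaussianMoment_ne_top (hp : 0 < p) : gaussianMoment p ≠ ⊤ := by
  have h := lintegral_rpow_enorm_lt_top_of_eLpNorm_lt_top (by simpa using hp)
    ENNReal.coe_ne_top (memLp_id_gaussianReal (μ := 0) (v := 1) p.toNNReal).eLpNorm_lt_top
  simpa [gaussianMoment, hp.le] using h.ne

lemma gaussianMoment_two : gaussianMoment 2 = 1 := by
  have h := ofReal_variance (memLp_id_gaussianReal (μ := 0) (v := 1) 2)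
  rw [variance_id_gaussianReal] at h
  simpa [evariance, gaussianMoment] using h.symm

variable {E : Type*} [NormedAddCommGroup E] [InnerProductSpace ℝ E] [FiniteDimensional ℝ E]
  [MeasurableSpace E] [BorelSpace E]

lemma stdGaussian_map_inner (y : E) :
    (stdGaussian E).map (fun g => ⟪y, g⟫) = (gaussianReal 0 1).map (‖y‖ * ·) := by
  have h := IsGaussian.map_eq_gaussianReal (μ := stdGaussian E) (innerSL ℝ y)
  rw [integral_strongDual_stdGaussian, variance_dual_stdGaussian, innerSL_apply_norm] at h
  rw [gaussianReal_map_const_mul, mul_zero, mul_one, ← Real.toNNReal_of_nonneg]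
  exact h

lemma lintegral_enorm_inner_rpow (hp : 0 ≤ p) (y : E) :
    ∫⁻ g, ‖⟪y, g⟫‖ₑ ^ p ∂stdGaussian E = ‖y‖ₑ ^ p * gaussianMoment p := by
  have hmeas : Measurable fun x : ℝ => ‖x‖ₑ ^ p := by fun_prop
  rw [← lintegral_map hmeas (by fun_prop), stdGaussian_map_inner,
    lintegral_map hmeas (measurable_const_mul _), gaussianMoment, ← lintegral_const_mul _ hmeas]
  simp only [enorm_mul, enorm_norm, ENNReal.mul_rpow_of_nonneg _ _ hp]

lemma lintegral_rpow_sum_enorm_inner_comparableWith (hp : 0 < p) {β : Type*} (G : Finset β)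
    (y : β → E) :
    ComparableWith (gaussianConst p)
      (∫⁻ g, (∑ b ∈ G, ‖⟪y b, g⟫‖ₑ ^ 2) ^ (p / 2) ∂stdGaussian E)
      ((∑ b ∈ G, ‖y b‖ₑ ^ 2) ^ (p / 2)) := by
  have hγ0 : (gaussianMoment p).toNNReal ≠ 0 := by
    simp [ENNReal.toNNReal_eq_zero_iff, gaussianMoment_ne_zero, gaussianMoment_ne_top hp]
  set u : β → E := fun b => ‖y b‖⁻¹ • y b
  have hu : ∀ b, ‖y b‖ₑ ^ 2 ≠ 0 → ‖u b‖ₑ = 1 := by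
    intro b hb
    have hyb : ‖y b‖ ≠ 0 := by simpa using hb
    simp [u, ← ofReal_norm, norm_smul, inv_mul_cancel₀ hyb]
  have hsplit : ∀ b g, ‖⟪y b, g⟫‖ₑ ^ 2 = ‖y b‖ₑ ^ 2 * ‖⟪u b, g⟫‖ₑ ^ 2 := by
    intro b g
    obtain hb | hb := eq_or_ne (y b) 0
    · simp [hb]
    · rw [← mul_pow, ← enorm_norm (y b), ← enorm_mul, real_inner_smul_left,
        mul_inv_cancel_left₀ (norm_ne_zero_iff.2 hb)]
  simp only [hsplit]
  refine lintegral_rpow_sum_mul_comparableWith (half_pos hp) hγ0 (by simp) (by fun_prop)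
    (fun b hb => ?_) fun b hb => ?_
  · simpa [hu b hb, gaussianMoment_two] using lintegral_enorm_inner_rpow zero_le_two (u b)
  · simpa [hu b hb, ENNReal.coe_toNNReal (gaussianMoment_ne_top hp), sq_rpow_half] using
      lintegral_enorm_inner_rpow hp.le (u b)

lemma lintegral_enorm_inner_rpow_comparableWith (hp : 0 < p) (y : E) :
    ComparableWith (gaussianConst p) (∫⁻ g, ‖⟪y, g⟫‖ₑ ^ p ∂stdGaussian E) (‖y‖ₑ ^ p) := by
  simpa only [Finset.sum_singleton, sq_rpow_half] using
    lintegral_rpow_sum_enorm_inner_comparableWith hp {()} fun _ => y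

end Gaussian

section MixedNorm

/-- The `p`-th power of the mixed `ℓ_p(ℓ_2)`-norm of the vectors `y a`, `a ∈ F`. The inner
`ℓ_2`-sums carry the weights `w i`, one sequence for each index `i` of the outer `ℓ_p`-sum. -/
def mixedSum {ι α E : Type*} [NormedAddCommGroup E] [NormedSpace ℝ E] (p : ℝ) (w : ι → α → ℝ)
    (F : Finset α) (y : α → E) : ℝ≥0∞ :=
  ∑' i, (∑ a ∈ F, ‖w i a • y a‖ₑ ^ 2) ^ (p / 2)

/-- The functions `e a` span a copy of a mixed `ℓ_p(ℓ_2)`-space in `L_p(μ)`: the `p`-th power of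
the norm of each finite linear combination agrees with `mixedSum` of its coefficients up to the
factor `C`. -/
def HasMixedNorm {ι α Ω : Type*} [MeasurableSpace Ω] (p : ℝ) (w : ι → α → ℝ) (μ : Measure Ω)
    (e : α → Ω → ℝ) (C : ℝ≥0) : Prop :=
  ∀ (F : Finset α) (z : α → ℝ),
    ComparableWith C (∫⁻ t, ‖∑ a ∈ F, e a t * z a‖ₑ ^ p ∂μ) (mixedSum p w F z)

variable {p : ℝ} {ι κ α β Ω Ω' E : Type*} [Countable ι]
  [NormedAddCommGroup E] [InnerProductSpace ℝ E] [FiniteDimensional ℝ E] [MeasurableSpace E]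
  [BorelSpace E] {w : ι → α → ℝ} {v : κ → β → ℝ}
  [MeasurableSpace Ω] {μ : Measure Ω} [SFinite μ] {e : α → Ω → ℝ} {C : ℝ≥0}
  [MeasurableSpace Ω'] {ν : Measure Ω'} [SFinite ν] {h : β → Ω' → ℝ} {D : ℝ≥0}

lemma lintegral_mixedSum_inner_comparableWith (hp : 0 < p) (w : ι → α → ℝ) (F : Finset α)
    (y : α → E) :
    ComparableWith (gaussianConst p) (∫⁻ g, mixedSum p w F (fun a => ⟪y a, g⟫) ∂stdGaussian E)
      (mixedSum p w F y) := by
  simp only [mixedSum, smul_eq_mul, ← real_inner_smul_left]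
  rw [lintegral_tsum fun i => by fun_prop]
  exact .tsum fun i => lintegral_rpow_sum_enorm_inner_comparableWith hp F fun a => w i a • y a

lemma HasMixedNorm.lintegral_enorm_sum_smul (he : HasMixedNorm p w μ e C) (hp : 0 < p)
    (he_meas : ∀ a, Measurable (e a)) (F : Finset α) (y : α → E) :
    ComparableWith (gaussianConst p * (C * gaussianConst p))
      (∫⁻ t, ‖∑ a ∈ F, e a t • y a‖ₑ ^ p ∂μ) (mixedSum p w F y) := by
  have hgauss : ComparableWith (gaussianConst p) (∫⁻ t, ‖∑ a ∈ F, e a t • y a‖ₑ ^ p ∂μ)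
      (∫⁻ g, ∫⁻ t, ‖∑ a ∈ F, e a t * ⟪y a, g⟫‖ₑ ^ p ∂μ ∂stdGaussian E) := by
    rw [lintegral_lintegral_swap (by fun_prop)]
    simp only [← real_inner_smul_left, ← sum_inner]
    exact (ComparableWith.lintegral fun t => lintegral_enorm_inner_rpow_comparableWith hp _).symm
  exact hgauss.trans ((ComparableWith.lintegral fun g => he F fun a => ⟪y a, g⟫).trans
    (lintegral_mixedSum_inner_comparableWith hp w F y))

lemma enorm_sq_eq_sum_enorm_sq {K : Type*} [Fintype K] (x : EuclideanSpace ℝ K) :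
    ‖x‖ₑ ^ 2 = ∑ k, ‖x k‖ₑ ^ 2 := by
  simp only [← ofReal_norm, ← ENNReal.ofReal_pow (norm_nonneg _), EuclideanSpace.real_norm_sq_eq]
  rw [ENNReal.ofReal_sum_of_nonneg fun k _ => sq_nonneg _]
  simp

theorem HasMixedNorm.tensor [Countable κ] (he : HasMixedNorm p w μ e C)
    (hh : HasMixedNorm p v ν h D) (hp : 0 < p) (he_meas : ∀ a, Measurable (e a))
    (hh_meas : ∀ b, Measurable (h b)) (F : Finset α) (G : Finset β) (z : α → β → ℝ) :
    ComparableWith (C * (gaussianConst p * (D * gaussianConst p)))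
      (∫⁻ st, ‖∑ a ∈ F, ∑ b ∈ G, e a st.1 * h b st.2 * z a b‖ₑ ^ p ∂μ.prod ν)
      (∑' (i : ι) (j : κ), (∑ a ∈ F, ∑ b ∈ G, ‖w i a * v j b * z a b‖ₑ ^ 2) ^ (p / 2)) := by
  let y (i : ι) (b : β) : EuclideanSpace ℝ F := WithLp.toLp 2 fun a => w i a * z a b
  have hslice : ∀ t, mixedSum p w F (fun a => ∑ b ∈ G, h b t * z a b)
      = ∑' i, ‖∑ b ∈ G, h b t • y i b‖ₑ ^ p := by
    intro t
    refine tsum_congr fun i => ?_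
    rw [← sq_rpow_half ‖_‖ₑ, enorm_sq_eq_sum_enorm_sq, ← Finset.sum_coe_sort]
    simp [y, Finset.mul_sum, mul_left_comm]
  have hmixed : ∀ i, mixedSum p v G (y i)
      = ∑' j, (∑ a ∈ F, ∑ b ∈ G, ‖w i a * v j b * z a b‖ₑ ^ 2) ^ (p / 2) := by
    intro i
    refine tsum_congr fun j => ?_
    simp only [enorm_sq_eq_sum_enorm_sq]
    rw [Finset.sum_comm, ← Finset.sum_coe_sort F]
    simp [y, mul_left_comm, mul_assoc]
  rw [lintegral_prod_symm' _ (by fun_prop)]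
  have hfiber : ComparableWith C
      (∫⁻ t, ∫⁻ s, ‖∑ a ∈ F, ∑ b ∈ G, e a s * h b t * z a b‖ₑ ^ p ∂μ ∂ν)
      (∫⁻ t, mixedSum p w F (fun a => ∑ b ∈ G, h b t * z a b) ∂ν) := by
    simp only [mul_assoc, ← Finset.mul_sum]
    exact .lintegral fun t => he F _
  refine hfiber.trans ?_
  simp only [hslice, ← hmixed]
  rw [lintegral_tsum fun i => by fun_prop]
  exact .tsum fun i => hh.lintegral_enorm_sum_smul hp hh_meas G (y i)

end MixedNorm

section Partition

variable {p : ℝ} {ι A B : Type*}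

/-- The weights that turn the norm of a family of partition–weight pairs `(P i, w i)` into a mixed
`ℓ_p(ℓ_2)`-norm: one weight for each block of each partition, cut off outside that block. -/
def blockWeight (P : ι → Set (Set A)) (w : ι → A → ℝ) (N : Σ i, P i) : A → ℝ :=
  Set.indicator N.2 (w N.1)

/-- The analogue of `pwNorm` on `A × B` for the products of the blocks of `P` and `Q`, with weights
`w a * v b`. -/
def tensorPWNorm (p : ℝ) (P : Set (Set A)) (w : A → ℝ) (Q : Set (Set B)) (v : B → ℝ)
    (c : A × B → ℝ) : ℝ≥0∞ :=
  (∑' (N : P) (M : Q), (∑' (a : N.1) (b : M.1),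
    ENNReal.ofReal ((c (a.1, b.1)) ^ 2 * (w a.1) ^ 2 * (v b.1) ^ 2)) ^ (p / 2)) ^ (1 / p)

lemma countable_of_pairwiseDisjoint [Countable A] {P : Set (Set A)} (hne : ∀ N ∈ P, N.Nonempty)
    (hP : P.PairwiseDisjoint id) : Countable P := by
  choose f hf using fun N : P => hne N.1 N.2
  refine Function.Injective.countable (f := f) fun M N h => Subtype.ext ?_
  exact hP.elim_set M.2 N.2 (f M) (hf M) (h ▸ hf N)

lemma finite_setOf_exists_mem {P : Set (Set A)} (hP : P.PairwiseDisjoint id) (F : Finset A) :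
    {N : P | ∃ a ∈ F, a ∈ N.1}.Finite := by
  have hunion : {N : P | ∃ a ∈ F, a ∈ N.1} = ⋃ a ∈ F, {N : P | a ∈ N.1} := by
    ext N
    simp
  rw [hunion]
  refine F.finite_toSet.biUnion fun a _ => Set.Subsingleton.finite fun M hM N hN => ?_
  exact Subtype.ext (hP.elim_set M.2 N.2 a hM hN)

lemma tsum_subtype_eq_sum_indicator {F : Finset A} {f : A → ℝ≥0∞} (hf : ∀ a ∉ F, f a = 0)
    (N : Set A) : ∑' a : N, f a = ∑ a ∈ F, N.indicator f a := by
  rw [tsum_subtype N f, tsum_eq_sum fun a ha => ?_]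
  exact Set.indicator_apply_eq_zero.2 fun _ => hf a ha

lemma ofReal_sq_eq_enorm_sq (x : ℝ) : ENNReal.ofReal (x ^ 2) = ‖x‖ₑ ^ 2 := by
  rw [← enorm_pow, Real.enorm_of_nonneg (sq_nonneg x)]

lemma rpow_one_div_rpow (hp : 0 < p) (x : ℝ≥0∞) : (x ^ (1 / p)) ^ p = x := by
  rw [one_div, ENNReal.rpow_inv_rpow hp.ne']

lemma pwNorm_rpow (hp : 0 < p) (P : Set (Set A)) (w : A → ℝ) {F : Finset A} {x : A → ℝ}
    (hx : ∀ a ∉ F, x a = 0) :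
    pwNorm p P w x ^ p
      = ∑' N : P, (∑ a ∈ F, ‖N.1.indicator w a * x a‖ₑ ^ 2) ^ (p / 2) := by
  rw [pwNorm, rpow_one_div_rpow hp]
  refine tsum_congr fun N => ?_
  rw [tsum_subtype_eq_sum_indicator (F := F)
    (f := fun a => ENNReal.ofReal (x a ^ 2 * w a ^ 2)) fun a ha => by simp [hx a ha]]
  simp only [← mul_pow, ofReal_sq_eq_enorm_sq, mul_comm (x _)]
  congr! with a
  by_cases ha : a ∈ N.1 <;> simp [ha]

lemma tensorPWNorm_rpow (hp : 0 < p) (P : Set (Set A)) (w : A → ℝ) (Q : Set (Set B)) (v : B → ℝ)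
    {F : Finset A} {G : Finset B} {c : A × B → ℝ} (hc : ∀ ab ∉ F ×ˢ G, c ab = 0) :
    tensorPWNorm p P w Q v c ^ p = ∑' (N : P) (M : Q), (∑ a ∈ F, ∑ b ∈ G,
      ‖N.1.indicator w a * M.1.indicator v b * c (a, b)‖ₑ ^ 2) ^ (p / 2) := by
  rw [tensorPWNorm, rpow_one_div_rpow hp]
  refine tsum_congr fun N => tsum_congr fun M => ?_
  have hinner (a : A) : ∑' b : M.1, ENNReal.ofReal (c (a, b) ^ 2 * w a ^ 2 * v b ^ 2)
      = ∑ b ∈ G, ‖M.1.indicator (fun b => w a * v b * c (a, b)) b‖ₑ ^ 2 := by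
    rw [tsum_subtype_eq_sum_indicator (F := G)
      (f := fun b => ENNReal.ofReal (c (a, b) ^ 2 * w a ^ 2 * v b ^ 2)) fun b hb => by
        simp [hc (a, b) (by simp [hb])]]
    refine Finset.sum_congr rfl fun b _ => ?_
    by_cases hb : b ∈ M.1 <;>
      simp [hb, ← mul_pow, ofReal_sq_eq_enorm_sq, mul_comm, mul_left_comm, mul_assoc]
  simp only [hinner]
  rw [tsum_subtype_eq_sum_indicator (F := F)
    (f := fun a => ∑ b ∈ G, ‖M.1.indicator (fun b => w a * v b * c (a, b)) b‖ₑ ^ 2) fun a ha => by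
      simp [hc (a, _) (by simp [ha])]]
  congr! 2 with a
  by_cases ha : a ∈ N.1
  · simp only [ha, Set.indicator_of_mem]
    refine Finset.sum_congr rfl fun b _ => ?_
    by_cases hb : b ∈ M.1 <;> simp [hb]
  · simp [ha]

lemma iSup_rpow_comparableWith [Finite ι] (hp : 0 < p) (X : ι → ℝ≥0∞) :
    ComparableWith (max 1 (Nat.card ι : ℝ≥0)) ((⨆ i, X i) ^ p) (∑' i, X i ^ p) := by
  have := Fintype.ofFinite ι
  refine .of_le ?_ ?_
  · rw [ENNReal.coe_one, one_mul, ← ENNReal.le_rpow_inv_iff hp]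
    exact iSup_le fun i => (ENNReal.le_rpow_inv_iff hp).2 (ENNReal.le_tsum i)
  · calc ∑' i, X i ^ p ≤ ∑' _ : ι, (⨆ i, X i) ^ p :=
          ENNReal.tsum_le_tsum fun i => ENNReal.rpow_le_rpow (le_iSup X i) hp.le
      _ = (Nat.card ι : ℝ≥0) * (⨆ i, X i) ^ p := by simp [tsum_fintype]

lemma famNorm_rpow_comparableWith [Finite ι] (hp : 0 < p) (P : ι → Set (Set A)) (w : ι → A → ℝ)
    {F : Finset A} {x : A → ℝ} (hx : ∀ a ∉ F, x a = 0) :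
    ComparableWith (max 1 (Nat.card ι : ℝ≥0)) (famNorm p (Set.range fun i => (P i, w i)) x ^ p)
      (mixedSum p (blockWeight P w) F x) := by
  have h := iSup_rpow_comparableWith hp fun i => pwNorm p (P i) (w i) x
  simp only [pwNorm_rpow hp _ _ hx] at h
  rw [famNorm, iSup_range, mixedSum, ENNReal.tsum_sigma']
  exact h

lemma iSup_tensorPWNorm_rpow_comparableWith {κ : Type*} [Finite ι] [Finite κ] (hp : 0 < p)
    (P : ι → Set (Set A)) (w : ι → A → ℝ) (Q : κ → Set (Set B)) (v : κ → B → ℝ)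
    {F : Finset A} {G : Finset B} {c : A × B → ℝ} (hc : ∀ ab ∉ F ×ˢ G, c ab = 0) :
    ComparableWith (max 1 (Nat.card (ι × κ) : ℝ≥0))
      ((⨆ (i : ι) (j : κ), tensorPWNorm p (P i) (w i) (Q j) (v j) c) ^ p)
      (∑' (N : Σ i, P i) (M : Σ j, Q j), (∑ a ∈ F, ∑ b ∈ G,
        ‖blockWeight P w N a * blockWeight Q v M b * c (a, b)‖ₑ ^ 2) ^ (p / 2)) := by
  have h := iSup_rpow_comparableWith hp fun ij : ι × κ =>
    tensorPWNorm p (P ij.1) (w ij.1) (Q ij.2) (v ij.2) c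
  simp only [tensorPWNorm_rpow hp _ _ _ _ hc] at h
  rw [iSup_prod, ENNReal.tsum_prod'] at h
  simp only [ENNReal.tsum_sigma', blockWeight]
  convert h using 4
  exact ENNReal.tsum_comm

lemma pwNorm_lt_top (hp : 0 < p) {P : Set (Set A)} (hP : P.PairwiseDisjoint id) (w : A → ℝ)
    {F : Finset A} {x : A → ℝ} (hx : ∀ a ∉ F, x a = 0) : pwNorm p P w x < ⊤ := by
  rw [← ENNReal.rpow_lt_top_iff_of_pos hp, pwNorm_rpow hp P w hx,
    tsum_eq_sum (s := (finite_setOf_exists_mem hP F).toFinset) fun N hN => ?_]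
  · refine ENNReal.sum_lt_top.2 fun N _ => ENNReal.rpow_lt_top_of_nonneg (half_pos hp).le ?_
    exact ENNReal.sum_ne_top.2 fun a _ => ENNReal.pow_ne_top enorm_ne_top
  · have hdisj : ∀ a ∈ F, a ∉ N.1 := by simpa using hN
    rw [Finset.sum_eq_zero fun a ha => by simp [hdisj a ha], ENNReal.zero_rpow_of_pos (half_pos hp)]

lemma famNorm_lt_top [Finite ι] (hp : 0 < p) {P : ι → Set (Set A)}
    (hP : ∀ i, (P i).PairwiseDisjoint id) (w : ι → A → ℝ) {F : Finset A} {x : A → ℝ}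
    (hx : ∀ a ∉ F, x a = 0) : famNorm p (Set.range fun i => (P i, w i)) x < ⊤ := by
  rw [famNorm, iSup_range]
  obtain _ | _ := isEmpty_or_nonempty ι
  · simp
  · obtain ⟨i, hi⟩ := exists_eq_ciSup_of_finite (f := fun i => pwNorm p (P i) (w i) x)
    exact hi ▸ pwNorm_lt_top hp (hP i) (w i) hx

end Partition

section Embedding

variable {Ω : Type*} [MeasurableSpace Ω] {μ : Measure Ω} {p M c : ℝ} {ι A : Type*}

/-- `S` is linear, bounded by `M` and bounded below by `c` on the space of the family `𝒞`. As in
`pwNorm`, vectors are arbitrary functions; nothing is asked of `S` where `famNorm` is infinite. -/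
structure IsLpEmbedding (p : ℝ) (𝒞 : Set (PWPair A)) (M c : ℝ)
    (S : (A → ℝ) → Lp ℝ (ENNReal.ofReal p) μ) : Prop where
  map_add : ∀ x y, famNorm p 𝒞 x < ⊤ → famNorm p 𝒞 y < ⊤ → S (x + y) = S x + S y
  map_smul : ∀ (r : ℝ) (x), famNorm p 𝒞 x < ⊤ → S (r • x) = r • S x
  upper : ∀ x, famNorm p 𝒞 x < ⊤ → ENNReal.ofReal ‖S x‖ ≤ ENNReal.ofReal M * famNorm p 𝒞 x
  lower : ∀ x, famNorm p 𝒞 x < ⊤ → ENNReal.ofReal c * famNorm p 𝒞 x ≤ ENNReal.ofReal ‖S x‖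

variable {𝒞 : Set (PWPair A)} {S : (A → ℝ) → Lp ℝ (ENNReal.ofReal p) μ}

lemma sum_smul_coordVec (F : Finset A) (z : A → ℝ) :
    ∑ a ∈ F, z a • coordVec a = Set.indicator F z := by
  classical
  ext a
  simp [coordVec, Finset.sum_apply, Set.indicator_apply, Pi.single_apply]

lemma IsLpEmbedding.map_indicator (hS : IsLpEmbedding p 𝒞 M c S)
    (hfin : ∀ (F : Finset A) (z : A → ℝ), famNorm p 𝒞 (Set.indicator F z) < ⊤)
    (F : Finset A) (z : A → ℝ) :
    S (Set.indicator F z) = ∑ a ∈ F, z a • S (coordVec a) := by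
  classical
  have hcoord (a : A) : famNorm p 𝒞 (coordVec a) < ⊤ := by
    simpa [coordVec] using hfin {a} 1
  rw [← sum_smul_coordVec]
  induction F using Finset.induction_on with
  | empty =>
    have h := hS.map_smul 0 0 (by simpa using hfin ∅ 0)
    simpa using h
  | insert a F ha ih =>
    have hsmul : famNorm p 𝒞 (z a • coordVec a) < ⊤ := by
      simpa only [← sum_smul_coordVec, Finset.sum_singleton] using hfin {a} z
    rw [Finset.sum_insert ha, Finset.sum_insert ha, hS.map_add _ _ hsmul, ih,
      hS.map_smul _ _ (hcoord a)]
    rw [sum_smul_coordVec]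
    exact hfin F z

lemma IsLpEmbedding.enorm_comparableWith (hS : IsLpEmbedding p 𝒞 M c S) (hc : 0 < c) {x : A → ℝ}
    (hx : famNorm p 𝒞 x < ⊤) :
    ComparableWith (max M.toNNReal c.toNNReal⁻¹) ‖S x‖ₑ (famNorm p 𝒞 x) := by
  rw [Lp.enorm_def, ← ENNReal.ofReal_toReal (Lp.eLpNorm_ne_top (S x)), ← Lp.norm_def]
  refine .of_le (hS.upper x hx) ?_
  rw [ENNReal.coe_inv (by simpa using hc), ← ENNReal.div_eq_inv_mul,
    ENNReal.le_div_iff_mul_le (by simp [hc]) (by simp), mul_comm]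
  exact hS.lower x hx

lemma lintegral_enorm_rpow_eq_eLpNorm_rpow (hp : 0 < p) (f : Ω → ℝ) :
    ∫⁻ t, ‖f t‖ₑ ^ p ∂μ = eLpNorm f (ENNReal.ofReal p) μ ^ p := by
  rw [eLpNorm_eq_lintegral_rpow_enorm_toReal (by simpa using hp) ENNReal.ofReal_ne_top,
    ENNReal.toReal_ofReal hp.le, rpow_one_div_rpow hp]

lemma lintegral_enorm_sum_rpow (hp : 0 < p) (F : Finset A) (z : A → ℝ)
    (f : A → Lp ℝ (ENNReal.ofReal p) μ) :
    ∫⁻ t, ‖∑ a ∈ F, f a t * z a‖ₑ ^ p ∂μ = ‖∑ a ∈ F, z a • f a‖ₑ ^ p := by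
  rw [lintegral_enorm_rpow_eq_eLpNorm_rpow hp, Lp.enorm_def]
  congr 1
  refine eLpNorm_congr_ae ?_
  have hsmul : ∀ᵐ t ∂μ, ∀ a ∈ F, (z a • f a) t = z a • f a t :=
    (Filter.eventually_all_finset F).2 fun a _ => Lp.coeFn_smul (z a) (f a)
  filter_upwards [hsmul, Lp.coeFn_finsetSum F fun a => z a • f a] with t ht hsum
  rw [hsum, Finset.sum_apply, Finset.sum_congr rfl ht]
  simp only [smul_eq_mul, mul_comm]

lemma IsLpEmbedding.exists_hasMixedNorm [Finite ι] {P : ι → Set (Set A)} {w : ι → A → ℝ}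
    (hS : IsLpEmbedding p (Set.range fun i => (P i, w i)) M c S) (hp : 0 < p) (hc : 0 < c)
    (hP : ∀ i, (P i).PairwiseDisjoint id) :
    ∃ C, HasMixedNorm p (blockWeight P w) μ (fun a => S (coordVec a)) C := by
  have hzero (F : Finset A) (z : A → ℝ) : ∀ a ∉ F, Set.indicator (F : Set A) z a = 0 :=
    fun a ha => Set.indicator_of_notMem (by simpa using ha) z
  have hfin (F : Finset A) (z : A → ℝ) := famNorm_lt_top hp hP w (hzero F z)
  refine ⟨(max M.toNNReal c.toNNReal⁻¹) ^ p * max 1 (Nat.card ι : ℝ≥0), fun F z => ?_⟩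
  rw [lintegral_enorm_sum_rpow hp, ← hS.map_indicator hfin]
  have hmixed : mixedSum p (blockWeight P w) F z
      = mixedSum p (blockWeight P w) F (Set.indicator F z) := by
    refine tsum_congr fun N => congrArg (· ^ (p / 2)) (Finset.sum_congr rfl fun a ha => ?_)
    rw [Set.indicator_of_mem (Finset.mem_coe.2 ha)]
  rw [hmixed]
  exact ((hS.enorm_comparableWith hc (hfin F z)).rpow hp.le).trans
    (famNorm_rpow_comparableWith hp P w (hzero F z))

end Embedding
lemma sum_mul_mul_eq_sum_image_sum_image {A B : Type*} [DecidableEq A] [DecidableEq B]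
    (c : A × B →₀ ℝ) (f : A → ℝ) (g : B → ℝ) :
    ∑ ab ∈ c.support, c ab * f ab.1 * g ab.2
      = ∑ a ∈ c.support.image Prod.fst, ∑ b ∈ c.support.image Prod.snd, f a * g b * c (a, b) := by
  rw [← Finset.sum_product', Finset.sum_subset Finset.subset_product fun ab _ hab => by
    rw [Finsupp.notMem_support_iff.1 hab, zero_mul, zero_mul]]
  exact Finset.sum_congr rfl fun ab _ => by ring

theorem statement13_general {A B : Type*} [Countable A] [Countable B] {p : ℝ} (hp : 0 < p)
    {ι κ : Type*} [Finite ι] [Finite κ] {P : ι → Set (Set A)} {w : ι → A → ℝ}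
    {Q : κ → Set (Set B)} {v : κ → B → ℝ} (hP : ∀ i, IsPartition (P i))
    (hQ : ∀ j, IsPartition (Q j)) {Ω Ω' : Type*} [MeasurableSpace Ω] [MeasurableSpace Ω']
    {μ : Measure Ω} {ν : Measure Ω'} [SFinite μ] [SFinite ν]
    {S : (A → ℝ) → Lp ℝ (ENNReal.ofReal p) μ} {T : (B → ℝ) → Lp ℝ (ENNReal.ofReal p) ν}
    {MS cS MT cT : ℝ} (hcS : 0 < cS) (hcT : 0 < cT)
    (hS : IsLpEmbedding p (Set.range fun i => (P i, w i)) MS cS S)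
    (hT : IsLpEmbedding p (Set.range fun j => (Q j, v j)) MT cT T) :
    ∃ c C : ℝ, 0 < c ∧ 0 < C ∧ ∀ coef : A × B →₀ ℝ,
      ENNReal.ofReal c * (⨆ (i : ι) (j : κ), tensorPWNorm p (P i) (w i) (Q j) (v j) coef)
        ≤ eLpNorm (fun st : Ω × Ω' => ∑ ab ∈ coef.support,
            coef ab * S (coordVec ab.1) st.1 * T (coordVec ab.2) st.2)
          (ENNReal.ofReal p) (μ.prod ν) ∧
      eLpNorm (fun st : Ω × Ω' => ∑ ab ∈ coef.support,
            coef ab * S (coordVec ab.1) st.1 * T (coordVec ab.2) st.2)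
          (ENNReal.ofReal p) (μ.prod ν)
        ≤ ENNReal.ofReal C * ⨆ (i : ι) (j : κ), tensorPWNorm p (P i) (w i) (Q j) (v j) coef := by
  classical
  have (i : ι) : Countable (P i) := countable_of_pairwiseDisjoint (hP i).1 (hP i).2.1
  have (j : κ) : Countable (Q j) := countable_of_pairwiseDisjoint (hQ j).1 (hQ j).2.1
  obtain ⟨C, hC⟩ := hS.exists_hasMixedNorm hp hcS fun i => (hP i).2.1
  obtain ⟨D, hD⟩ := hT.exists_hasMixedNorm hp hcT fun j => (hQ j).2.1
  let K : ℝ≥0 := (C * (gaussianConst p * (D * gaussianConst p))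
    * max 1 (Nat.card (ι × κ) : ℝ≥0)) ^ p⁻¹
  refine ⟨(K + 1)⁻¹, K + 1, by positivity, by positivity, fun coef => ?_⟩
  have hmain : ComparableWith K
      (eLpNorm (fun st : Ω × Ω' => ∑ ab ∈ coef.support,
        coef ab * S (coordVec ab.1) st.1 * T (coordVec ab.2) st.2) (ENNReal.ofReal p) (μ.prod ν))
      (⨆ (i : ι) (j : κ), tensorPWNorm p (P i) (w i) (Q j) (v j) coef) := by
    have hcoef : ∀ ab ∉ coef.support.image Prod.fst ×ˢ coef.support.image Prod.snd,
        coef ab = 0 :=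
      fun ab hab => Finsupp.notMem_support_iff.1 fun h => hab (Finset.subset_product h)
    have h := (hC.tensor hD hp (fun a => (Lp.stronglyMeasurable _).measurable)
      (fun b => (Lp.stronglyMeasurable _).measurable) _ _ fun a b => coef (a, b)).trans
      (iSup_tensorPWNorm_rpow_comparableWith hp P w Q v hcoef).symm
    have hfun (st : Ω × Ω') := sum_mul_mul_eq_sum_image_sum_image coef
      (fun a => S (coordVec a) st.1) fun b => T (coordVec b) st.2
    simp only [hfun]
    rw [lintegral_enorm_rpow_eq_eLpNorm_rpow hp] at h
    simpa only [ENNReal.rpow_rpow_inv hp.ne'] using h.rpow (inv_nonneg.2 hp.le)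
  exact ⟨hmain.ofReal_inv_mul_le, hmain.le_ofReal_mul⟩

/-- If `X` and `Y` have norms given by finitely many partitions and
weights (families `(P_i,w^i)_{i<m}` and `(Q_j,v^j)_{j<n}`) and `S, T` are isomorphic
embeddings into `L_p([0,1])`, then the `L_p` tensor product of `X` and `Y` has a norm
given by finitely many partitions and weights: the `L_p([0,1]²)`-norm of
`Σ c_{a,b} Sx_a ⊗ Ty_b` is two-sidedly equivalent to
`max_{i,j} (Σ_{p₀∈P_i,q₀∈Q_j} (Σ_{a∈p₀,b∈q₀} c_{a,b}² (w^i_a)² (v^j_b)²)^{p/2})^{1/p}`. -/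
theorem statement13 {A B : Type*} [Countable A] [Countable B] (p : ℝ) (hp : 2 < p)
    [Fact (1 ≤ ENNReal.ofReal p)]
    {m n : ℕ} (hm : 0 < m) (hn : 0 < n)
    (P : Fin m → Set (Set A)) (w : Fin m → A → ℝ)
    (Q : Fin n → Set (Set B)) (v : Fin n → B → ℝ)
    (hP : ∀ i, IsPartition (P i)) (hw : ∀ i, IsWeight (w i))
    (hQ : ∀ j, IsPartition (Q j)) (hv : ∀ j, IsWeight (v j))
    (S : (A → ℝ) → MeasureTheory.Lp ℝ (ENNReal.ofReal p)
      (volume : Measure ↥(Set.Icc (0 : ℝ) 1)))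
    (T : (B → ℝ) → MeasureTheory.Lp ℝ (ENNReal.ofReal p)
      (volume : Measure ↥(Set.Icc (0 : ℝ) 1)))
    (MS cS MT cT : ℝ) (hcS : 0 < cS) (hcT : 0 < cT)
    (hSadd : ∀ x y, famNorm p (Set.range fun i => (P i, w i)) x < ⊤ →
      famNorm p (Set.range fun i => (P i, w i)) y < ⊤ → S (x + y) = S x + S y)
    (hSsmul : ∀ (r : ℝ) (x), famNorm p (Set.range fun i => (P i, w i)) x < ⊤ →
      S (r • x) = r • S x)
    (hSub : ∀ x, famNorm p (Set.range fun i => (P i, w i)) x < ⊤ →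
      ENNReal.ofReal ‖S x‖ ≤ ENNReal.ofReal MS * famNorm p (Set.range fun i => (P i, w i)) x)
    (hSlb : ∀ x, famNorm p (Set.range fun i => (P i, w i)) x < ⊤ →
      ENNReal.ofReal cS * famNorm p (Set.range fun i => (P i, w i)) x ≤ ENNReal.ofReal ‖S x‖)
    (hTadd : ∀ x y, famNorm p (Set.range fun j => (Q j, v j)) x < ⊤ →
      famNorm p (Set.range fun j => (Q j, v j)) y < ⊤ → T (x + y) = T x + T y)
    (hTsmul : ∀ (r : ℝ) (x), famNorm p (Set.range fun j => (Q j, v j)) x < ⊤ →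
      T (r • x) = r • T x)
    (hTub : ∀ x, famNorm p (Set.range fun j => (Q j, v j)) x < ⊤ →
      ENNReal.ofReal ‖T x‖ ≤ ENNReal.ofReal MT * famNorm p (Set.range fun j => (Q j, v j)) x)
    (hTlb : ∀ x, famNorm p (Set.range fun j => (Q j, v j)) x < ⊤ →
      ENNReal.ofReal cT * famNorm p (Set.range fun j => (Q j, v j)) x ≤ ENNReal.ofReal ‖T x‖) :
    ∃ c C : ℝ, 0 < c ∧ 0 < C ∧
      ∀ coef : A × B →₀ ℝ,
        ENNReal.ofReal c *
          (⨆ (i : Fin m) (j : Fin n),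
            (∑' (N : (P i)) (Mq : (Q j)),
              (∑' (a : N.1) (b : Mq.1),
                ENNReal.ofReal ((coef (a.1, b.1)) ^ 2 * (w i a.1) ^ 2 * (v j b.1) ^ 2))
              ^ (p / 2)) ^ (1 / p))
        ≤ MeasureTheory.eLpNorm
            (fun st : ↥(Set.Icc (0 : ℝ) 1) × ↥(Set.Icc (0 : ℝ) 1) =>
              ∑ ab ∈ coef.support,
                coef ab * (S (coordVec ab.1)) st.1 * (T (coordVec ab.2)) st.2)
            (ENNReal.ofReal p) (volume.prod volume) ∧
        MeasureTheory.eLpNorm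
            (fun st : ↥(Set.Icc (0 : ℝ) 1) × ↥(Set.Icc (0 : ℝ) 1) =>
              ∑ ab ∈ coef.support,
                coef ab * (S (coordVec ab.1)) st.1 * (T (coordVec ab.2)) st.2)
            (ENNReal.ofReal p) (volume.prod volume)
        ≤ ENNReal.ofReal C *
          (⨆ (i : Fin m) (j : Fin n),
            (∑' (N : (P i)) (Mq : (Q j)),
              (∑' (a : N.1) (b : Mq.1),
                ENNReal.ofReal ((coef (a.1, b.1)) ^ 2 * (w i a.1) ^ 2 * (v j b.1) ^ 2))
              ^ (p / 2)) ^ (1 / p)) :=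
  statement13_general (by linarith) hP hQ hcS hcT ⟨hSadd, hSsmul, hSub, hSlb⟩
    ⟨hTadd, hTsmul, hTub, hTlb⟩
end
end
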